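/- arXiv:2603.10333 — 5 statements merged into one kernel-verified Lean document; each statement's English description precedes it below -/
import Mathlib

section
/- Let Ω ⊆ ℝⁿ be open, let f^L, f^R : ℝⁿ → ℝⁿ be C¹, and let H : ℝⁿ → ℝ be C² with ∇H(x*) ≠ 0, where x* ∈ Σ = {x ∈ Ω : H(x) = 0}. Suppose x* lies in an attracting sliding region, i.e. 𝓛_{f^L}H(x*) > 0 and 𝓛_{f^R}H(x*) < 0. Suppose further that the following sliding-stability hypothesis holds: for every neighbourhood N₁ ⊆ Ω of x* there exists a neighbourhood N₂ ⊆ N₁ of x* such that every Filippov solution φ with φ(0) ∈ N₂ ∩ Σ satisfies φ(t) ∈ N₁ for all t ≥ 0 and φ(t) → x* as t → ∞. Then x* is an asymptotically stable equilibrium of the Filippov system: it is Lyapunov stable (for every neighbourhood N₁ ⊆ Ω of x* there is a neighbourhood N₂ ⊆ N₁ of x* such that every Filippov solution φ with φ(0) ∈ N₂ satisfies φ(t) ∈ N₁ for all t ≥ 0), and there is a neighbourhood N₃ of x* such that every Filippov solution φ with φ(0) ∈ N₃ satisfies φ(t) → x* as t → ∞. -/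
open MeasureTheory Filter Topology

/-- The Lie derivative `𝓛_f h (x) = Dh(x)[f(x)]`. -/
noncomputable def lieD {n : ℕ} (f : EuclideanSpace ℝ (Fin n) → EuclideanSpace ℝ (Fin n))
    (h : EuclideanSpace ℝ (Fin n) → ℝ) (x : EuclideanSpace ℝ (Fin n)) : ℝ :=
  fderiv ℝ h x (f x)

/-- The Filippov set-valued function `𝓕(x)`. -/
def FilippovSet {n : ℕ} (fL fR : EuclideanSpace ℝ (Fin n) → EuclideanSpace ℝ (Fin n))
    (H : EuclideanSpace ℝ (Fin n) → ℝ) (x : EuclideanSpace ℝ (Fin n)) :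
    Set (EuclideanSpace ℝ (Fin n)) :=
  {p | (H x < 0 ∧ p = fL x) ∨ (H x > 0 ∧ p = fR x) ∨
    (H x = 0 ∧ ∃ s ∈ Set.Icc (0:ℝ) 1, p = (1 - s) • fL x + s • fR x)}

/-- A Filippov solution: a locally absolutely continuous curve in `Ω` whose a.e. derivative
lies in the Filippov set. -/
def IsFilippovSol {n : ℕ} (fL fR : EuclideanSpace ℝ (Fin n) → EuclideanSpace ℝ (Fin n))
    (H : EuclideanSpace ℝ (Fin n) → ℝ) (Ω : Set (EuclideanSpace ℝ (Fin n)))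
    (φ : ℝ → EuclideanSpace ℝ (Fin n)) : Prop :=
  (∀ t : ℝ, 0 ≤ t → φ t ∈ Ω) ∧
  ∃ v : ℝ → EuclideanSpace ℝ (Fin n), LocallyIntegrable v ∧
    (∀ t : ℝ, φ t = φ 0 + ∫ s in (0:ℝ)..t, v s) ∧
    (∀ᵐ t ∂(volume.restrict (Set.Ici (0:ℝ))), v t ∈ FilippovSet fL fR H (φ t))

/-!
In a small ball `B` around `x*`, both fields are bounded by some `M`, so a solution that starts
near `x*` stays in `B` for a time `τ` that depends only on `B`. Let `L` be the derivative of `H` at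
`x*`. In `B` one has `L (f^R) ≤ -m < 0`, and strict differentiability makes `H` agree with `L` on
increments `y - x` up to `ε ‖y - x‖` with `ε * M < m`. Hence `H` decreases along a solution at rate
at least `m - ε * M` as long as it is positive, and a solution starting close enough to `Σ` with
`H ≥ 0` meets `Σ` before time `τ`. Exchanging the two fields and replacing `H` by `-H` handles the
other side. From the meeting time on, the sliding-stability hypothesis applies to the translated
solution. Since `L` is a fixed functional, no chain rule along the absolutely continuous curve is
needed: it suffices to integrate `L` of the velocity.
-/

open scoped NNReal

section Velocity

variable {E : Type*} [NormedAddCommGroup E] [NormedSpace ℝ E] {φ v : ℝ → E} {M a b τ : ℝ}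

/-- The curve `φ` is locally absolutely continuous with a.e. velocity `v`, expressed by saying that
`φ` is a primitive of the locally integrable function `v`. As in `IsFilippovSol`, this is required
on the whole line. -/
structure HasVelocity (φ v : ℝ → E) : Prop where
  locallyIntegrable : LocallyIntegrable v
  eq_add_integral : ∀ t : ℝ, φ t = φ 0 + ∫ s in (0:ℝ)..t, v s

namespace HasVelocity

lemma intervalIntegrable (hφ : HasVelocity φ v) (a b : ℝ) : IntervalIntegrable v volume a b :=
  (hφ.locallyIntegrable.integrableOn_isCompact isCompact_uIcc).intervalIntegrable

lemma continuous (hφ : HasVelocity φ v) : Continuous φ := by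
  rw [funext hφ.eq_add_integral]
  exact continuous_const.add (intervalIntegral.continuous_primitive hφ.intervalIntegrable 0)

lemma sub_eq_integral (hφ : HasVelocity φ v) (a b : ℝ) : φ b - φ a = ∫ s in a..b, v s := by
  rw [hφ.eq_add_integral b, hφ.eq_add_integral a, add_sub_add_left_eq_sub,
    intervalIntegral.integral_interval_sub_left (hφ.intervalIntegrable 0 b)
      (hφ.intervalIntegrable 0 a)]

lemma comp_add_right (hφ : HasVelocity φ v) (T : ℝ) :
    HasVelocity (fun t ↦ φ (t + T)) (fun t ↦ v (t + T)) where
  locallyIntegrable := by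
    refine (locallyIntegrable_map_homeomorph (Homeomorph.addRight T)).1 ?_
    simpa only [Homeomorph.coe_addRight, map_add_right_eq_self] using hφ.locallyIntegrable
  eq_add_integral t := by
    rw [intervalIntegral.integral_comp_add_right, ← hφ.sub_eq_integral, add_sub_cancel]

lemma norm_sub_le (hφ : HasVelocity φ v) (hab : a ≤ b)
    (hv : ∀ᵐ t, t ∈ Set.Ioc a b → ‖v t‖ ≤ M) : ‖φ b - φ a‖ ≤ M * (b - a) := by
  rw [hφ.sub_eq_integral, ← abs_of_nonneg (sub_nonneg.2 hab)]
  refine intervalIntegral.norm_integral_le_of_norm_le_const_ae ?_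
  rwa [Set.uIoc_of_le hab]

lemma apply_sub_le [CompleteSpace E] (hφ : HasVelocity φ v) (L : E →L[ℝ] ℝ) {c : ℝ} (hab : a ≤ b)
    (hv : ∀ᵐ t, t ∈ Set.Icc a b → L (v t) ≤ c) : L (φ b - φ a) ≤ c * (b - a) := by
  have hLv : IntervalIntegrable (fun t ↦ L (v t)) volume a b :=
    ⟨L.integrable_comp (hφ.intervalIntegrable a b).1,
      L.integrable_comp (hφ.intervalIntegrable a b).2⟩
  calc L (φ b - φ a) = ∫ t in a..b, L (v t) := by
        rw [hφ.sub_eq_integral, L.intervalIntegral_comp_comm (hφ.intervalIntegrable a b)]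
    _ ≤ ∫ _ in a..b, c := intervalIntegral.integral_mono_ae_restrict hab hLv
        intervalIntegrable_const ((ae_restrict_iff' measurableSet_Icc).2 hv)
    _ = c * (b - a) := by rw [intervalIntegral.integral_const, smul_eq_mul, mul_comm]

lemma mem_ball_of_norm_le (hφ : HasVelocity φ v) {x : E} {r δ : ℝ} (hM : 0 ≤ M)
    (hv : ∀ᵐ t, 0 ≤ t → φ t ∈ Metric.ball x δ → ‖v t‖ ≤ M)
    (h0 : φ 0 ∈ Metric.ball x r) (hδ : r + M * τ ≤ δ) :
    ∀ t ∈ Set.Icc 0 τ, φ t ∈ Metric.ball x δ := by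
  by_contra! ⟨t₁, ht₁, ht₁_out⟩
  have h_compact : IsCompact (Set.Icc 0 τ ∩ φ ⁻¹' (Metric.ball x δ)ᶜ) :=
    isCompact_Icc.inter_right (Metric.isOpen_ball.isClosed_compl.preimage hφ.continuous)
  obtain ⟨t₀, ⟨ht₀, ht₀_out⟩, h_first⟩ := h_compact.exists_isLeast ⟨t₁, ht₁, ht₁_out⟩
  have hv_before : ∀ᵐ t, t ∈ Set.Ioc 0 t₀ → ‖v t‖ ≤ M := by
    filter_upwards [hv, Measure.ae_ne volume t₀] with t hvt hne ht
    refine hvt ht.1.le ?_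
    by_contra h_out
    exact hne (ht.2.antisymm (h_first ⟨⟨ht.1.le, ht.2.trans ht₀.2⟩, h_out⟩))
  refine ht₀_out (Metric.mem_ball.2 ?_)
  calc dist (φ t₀) x ≤ dist (φ t₀) (φ 0) + dist (φ 0) x := dist_triangle _ _ _
    _ < M * (t₀ - 0) + r :=
        add_lt_add_of_le_of_lt (dist_eq_norm (φ t₀) _ ▸ hφ.norm_sub_le ht₀.1 hv_before) h0
    _ ≤ M * τ + r := by rw [sub_zero]; gcongr; exact ht₀.2
    _ ≤ δ := by linarith

lemma map_le_add_mul [CompleteSpace E] (hφ : HasVelocity φ v) {H : E → ℝ} {L : E →L[ℝ] ℝ}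
    {U : Set E} {ε : ℝ≥0} {m : ℝ} (hH : ApproximatesLinearOn H L U ε) (hab : a ≤ b)
    (ha : φ a ∈ U) (hb : φ b ∈ U) (hM : ∀ᵐ t, t ∈ Set.Icc a b → ‖v t‖ ≤ M)
    (hm : ∀ᵐ t, t ∈ Set.Icc a b → L (v t) ≤ -m) :
    H (φ b) ≤ H (φ a) + (ε * M - m) * (b - a) := by
  have h_norm : ‖φ b - φ a‖ ≤ M * (b - a) :=
    hφ.norm_sub_le hab (hM.mono fun t ht hmem ↦ ht (Set.Ioc_subset_Icc_self hmem))
  calc H (φ b) ≤ H (φ a) + L (φ b - φ a) + ε * ‖φ b - φ a‖ := by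
        linarith [(Real.norm_eq_abs _ ▸ le_abs_self _).trans (hH _ hb _ ha)]
    _ ≤ H (φ a) + -m * (b - a) + ε * (M * (b - a)) := by
        gcongr
        exact hφ.apply_sub_le L hab hm
    _ = H (φ a) + (ε * M - m) * (b - a) := by ring

lemma exists_map_eq_zero [CompleteSpace E] (hφ : HasVelocity φ v) {H : E → ℝ} {L : E →L[ℝ] ℝ}
    {U : Set E} {ε : ℝ≥0} {m : ℝ} (hH : ApproximatesLinearOn H L U ε) (hτ : 0 ≤ τ)
    (hU : ∀ t ∈ Set.Icc 0 τ, φ t ∈ U) (hM : ∀ᵐ t, t ∈ Set.Icc 0 τ → ‖v t‖ ≤ M)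
    (hm : ∀ᵐ t, t ∈ Set.Icc 0 τ → 0 < H (φ t) → L (v t) ≤ -m)
    (h0 : 0 ≤ H (φ 0)) (h_close : H (φ 0) < (m - ε * M) * τ) :
    ∃ T ∈ Set.Icc 0 τ, H (φ T) = 0 := by
  have h_cont : ContinuousOn (fun t ↦ H (φ t)) (Set.Icc 0 τ) :=
    hH.continuousOn.comp hφ.continuous.continuousOn hU
  obtain ⟨t, ht, ht_nonpos⟩ : ∃ t ∈ Set.Icc 0 τ, H (φ t) ≤ 0 := by
    by_contra! h_pos
    have h_decr := hφ.map_le_add_mul hH hτ (hU 0 ⟨le_rfl, hτ⟩) (hU τ ⟨hτ, le_rfl⟩) hM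
      (hm.mono fun t ht hmem ↦ ht hmem (h_pos t hmem))
    linarith [h_pos τ ⟨hτ, le_rfl⟩]
  have h_sub : Set.Icc 0 t ⊆ Set.Icc 0 τ := Set.Icc_subset_Icc_right ht.2
  obtain ⟨T, hT, hHT⟩ := intermediate_value_Icc' ht.1 (h_cont.mono h_sub) ⟨ht_nonpos, h0⟩
  exact ⟨T, h_sub hT, hHT⟩

end HasVelocity

end Velocity

section Filippov

variable {n : ℕ} {fL fR : EuclideanSpace ℝ (Fin n) → EuclideanSpace ℝ (Fin n)}
  {H : EuclideanSpace ℝ (Fin n) → ℝ} {L : EuclideanSpace ℝ (Fin n) →L[ℝ] ℝ}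
  {Ω S N : Set (EuclideanSpace ℝ (Fin n))} {φ : ℝ → EuclideanSpace ℝ (Fin n)}
  {x xs : EuclideanSpace ℝ (Fin n)}

lemma filippovSet_subset_of_convex {C : Set (EuclideanSpace ℝ (Fin n))} (hC : Convex ℝ C)
    (hL : fL x ∈ C) (hR : fR x ∈ C) : FilippovSet fL fR H x ⊆ C := by
  rintro p (⟨-, rfl⟩ | ⟨-, rfl⟩ | ⟨-, s, hs, rfl⟩)
  · exact hL
  · exact hR
  · exact hC hL hR (sub_nonneg.2 hs.2) hs.1 (sub_add_cancel 1 s)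

lemma eq_of_mem_filippovSet_of_pos {p : EuclideanSpace ℝ (Fin n)}
    (hp : p ∈ FilippovSet fL fR H x) (hx : 0 < H x) : p = fR x := by
  rcases hp with ⟨h_neg, -⟩ | ⟨-, hp⟩ | ⟨h_zero, -⟩
  · exact absurd h_neg hx.not_gt
  · exact hp
  · exact absurd h_zero hx.ne'

lemma filippovSet_subset_swap_neg : FilippovSet fL fR H x ⊆ FilippovSet fR fL (-H) x := by
  rintro p (⟨hx, hp⟩ | ⟨hx, hp⟩ | ⟨hx, s, hs, hp⟩)
  · exact Or.inr (Or.inl ⟨neg_pos.2 hx, hp⟩)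
  · exact Or.inl ⟨neg_neg_iff_pos.2 hx, hp⟩
  · refine Or.inr (Or.inr ⟨neg_eq_zero.2 hx, 1 - s, ⟨sub_nonneg.2 hs.2, sub_le_self 1 hs.1⟩, ?_⟩)
    rw [hp, sub_sub_cancel, add_comm]

namespace IsFilippovSol

lemma exists_hasVelocity (hφ : IsFilippovSol fL fR H Ω φ) :
    ∃ v, HasVelocity φ v ∧ ∀ᵐ t, 0 ≤ t → v t ∈ FilippovSet fL fR H (φ t) := by
  obtain ⟨-, v, hv, h_int, h_mem⟩ := hφ
  exact ⟨v, ⟨hv, h_int⟩, (ae_restrict_iff' measurableSet_Ici).1 h_mem⟩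

lemma swap_neg (hφ : IsFilippovSol fL fR H Ω φ) : IsFilippovSol fR fL (-H) Ω φ := by
  obtain ⟨hΩ, v, hv, h_int, h_mem⟩ := hφ
  exact ⟨hΩ, v, hv, h_int, h_mem.mono fun _ ht ↦ filippovSet_subset_swap_neg ht⟩

lemma comp_add_right (hφ : IsFilippovSol fL fR H Ω φ) {T : ℝ} (hT : 0 ≤ T) :
    IsFilippovSol fL fR H Ω (fun t ↦ φ (t + T)) := by
  obtain ⟨v, hv, h_mem⟩ := hφ.exists_hasVelocity
  have hv_shift := hv.comp_add_right T
  refine ⟨fun t ht ↦ hφ.1 _ (add_nonneg ht hT), _, hv_shift.locallyIntegrable,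
    hv_shift.eq_add_integral, (ae_restrict_iff' measurableSet_Ici).2 ?_⟩
  filter_upwards [(measurePreserving_add_right volume T).quasiMeasurePreserving.ae h_mem]
    with t ht ht0
  exact ht (add_nonneg ht0 hT)

end IsFilippovSol

lemma exists_ball_bounds (hfL : ContinuousAt fL xs) (hfR : ContinuousAt fR xs)
    (hH : HasStrictFDerivAt H L xs) (hR : L (fR xs) < 0) (hN : N ∈ 𝓝 xs) :
    ∃ δ > 0, ∃ M > 0, ∃ m : ℝ, ∃ ε : ℝ≥0, ε * M < m ∧ Metric.ball xs δ ⊆ N ∧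
      ApproximatesLinearOn H L (Metric.ball xs δ) ε ∧
      ∀ x ∈ Metric.ball xs δ, ‖fL x‖ ≤ M ∧ ‖fR x‖ ≤ M ∧ L (fR x) ≤ -m := by
  obtain ⟨k, hRk, hk⟩ := exists_between hR
  obtain ⟨M, hM⟩ := exists_gt (max ‖fL xs‖ ‖fR xs‖)
  have hM0 : 0 < M := (norm_nonneg _).trans_lt (max_lt_iff.1 hM).1
  obtain ⟨ε, hε, hεM⟩ := exists_between (div_pos (neg_pos.2 hk) hM0)
  lift ε to ℝ≥0 using hε.le
  obtain ⟨s, hs, hHs⟩ := hH.approximates_deriv_on_nhds (c := ε) (Or.inr (NNReal.coe_pos.1 hε))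
  have h_bounds : ∀ᶠ x in 𝓝 xs, x ∈ N ∧ x ∈ s ∧ ‖fL x‖ ≤ M ∧ ‖fR x‖ ≤ M ∧ L (fR x) ≤ k := by
    filter_upwards [hN, hs, hfL.norm.eventually_lt_const (max_lt_iff.1 hM).1,
      hfR.norm.eventually_lt_const (max_lt_iff.1 hM).2,
      (L.continuous.continuousAt.comp hfR).eventually_lt_const hRk] with x hxN hxs hxL hxR hxk
    exact ⟨hxN, hxs, hxL.le, hxR.le, hxk.le⟩
  obtain ⟨δ, hδ, h_ball⟩ := Metric.eventually_nhds_iff_ball.1 h_bounds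
  refine ⟨δ, hδ, M, hM0, -k, ε, (lt_div_iff₀ hM0).1 hεM, fun x hx ↦ (h_ball x hx).1,
    hHs.mono_set fun x hx ↦ (h_ball x hx).2.1, fun x hx ↦ ?_⟩
  rw [neg_neg]
  exact (h_ball x hx).2.2

lemma exists_nhds_reaches_zero_of_nonneg (hfL : ContinuousAt fL xs) (hfR : ContinuousAt fR xs)
    (hH : HasStrictFDerivAt H L xs) (hxs : H xs = 0) (hR : L (fR xs) < 0) (hN : N ∈ 𝓝 xs) :
    ∃ N' ∈ 𝓝 xs, ∀ φ, IsFilippovSol fL fR H Ω φ → φ 0 ∈ N' → 0 ≤ H (φ 0) →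
      ∃ T ≥ 0, H (φ T) = 0 ∧ ∀ t ∈ Set.Icc 0 T, φ t ∈ N := by
  obtain ⟨δ, hδ, M, hM, m, ε, hεM, hδN, hHδ, h_bounds⟩ := exists_ball_bounds hfL hfR hH hR hN
  set τ : ℝ := δ / 2 / M with hτ_def
  have hτ : 0 < τ := by positivity
  have hMτ : δ / 2 + M * τ ≤ δ := by rw [hτ_def, mul_div_cancel₀ _ hM.ne', add_halves]
  have hH_small : ∀ᶠ x in 𝓝 xs, H x < (m - ε * M) * τ :=
    hH.continuousAt.eventually_lt_const (hxs ▸ mul_pos (sub_pos.2 hεM) hτ)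
  refine ⟨Metric.ball xs (δ / 2) ∩ {x | H x < (m - ε * M) * τ},
    inter_mem (Metric.ball_mem_nhds xs (half_pos hδ)) hH_small, fun φ hφ ⟨h0, hH0⟩ h0_nonneg ↦ ?_⟩
  obtain ⟨v, hv, h_mem⟩ := hφ.exists_hasVelocity
  have hv_norm : ∀ᵐ t, 0 ≤ t → φ t ∈ Metric.ball xs δ → ‖v t‖ ≤ M := by
    filter_upwards [h_mem] with t ht ht0 ht_ball
    obtain ⟨hL_le, hR_le, -⟩ := h_bounds _ ht_ball
    exact mem_closedBall_zero_iff.1 (filippovSet_subset_of_convex (convex_closedBall 0 M)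
      (mem_closedBall_zero_iff.2 hL_le) (mem_closedBall_zero_iff.2 hR_le) (ht ht0))
  have h_ball : ∀ t ∈ Set.Icc 0 τ, φ t ∈ Metric.ball xs δ :=
    hv.mem_ball_of_norm_le hM.le hv_norm h0 hMτ
  have hv_decr : ∀ᵐ t, t ∈ Set.Icc 0 τ → 0 < H (φ t) → L (v t) ≤ -m := by
    filter_upwards [h_mem] with t ht htτ h_pos
    rw [eq_of_mem_filippovSet_of_pos (ht htτ.1) h_pos]
    exact (h_bounds _ (h_ball t htτ)).2.2
  obtain ⟨T, hT, hHT⟩ := hv.exists_map_eq_zero hHδ hτ.le h_ball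
    (hv_norm.mono fun t ht htτ ↦ ht htτ.1 (h_ball t htτ)) hv_decr h0_nonneg hH0
  exact ⟨T, hT.1, hHT, fun t ht ↦ hδN (h_ball t ⟨ht.1, ht.2.trans hT.2⟩)⟩

lemma exists_nhds_reaches_zero (hfL : ContinuousAt fL xs) (hfR : ContinuousAt fR xs)
    (hH : HasStrictFDerivAt H L xs) (hxs : H xs = 0) (hL : 0 < L (fL xs)) (hR : L (fR xs) < 0)
    (hN : N ∈ 𝓝 xs) :
    ∃ N' ∈ 𝓝 xs, ∀ φ, IsFilippovSol fL fR H Ω φ → φ 0 ∈ N' →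
      ∃ T ≥ 0, H (φ T) = 0 ∧ ∀ t ∈ Set.Icc 0 T, φ t ∈ N := by
  obtain ⟨NR, hNR, h_right⟩ :=
    exists_nhds_reaches_zero_of_nonneg (Ω := Ω) hfL hfR hH hxs hR hN
  obtain ⟨NL, hNL, h_left⟩ :=
    exists_nhds_reaches_zero_of_nonneg (Ω := Ω) hfR hfL hH.neg (neg_eq_zero.2 hxs)
      (neg_lt_zero.2 hL) hN
  refine ⟨NL ∩ NR, inter_mem hNL hNR, fun φ hφ h0 ↦ ?_⟩
  rcases le_total 0 (H (φ 0)) with h_nonneg | h_nonpos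
  · exact h_right φ hφ h0.2 h_nonneg
  · obtain ⟨T, hT, hHT, hTN⟩ := h_left φ hφ.swap_neg h0.1 (neg_nonneg.2 h_nonpos)
    exact ⟨T, hT, neg_eq_zero.1 hHT, hTN⟩

/-- Asymptotic stability of `xs` with respect to the solutions that start in `S`: stability and
attraction hold with one and the same neighbourhood of initial values. For `S = Σ` this is the
stability of the sliding dynamics. -/
def IsAsymptoticallyStableFrom (fL fR : EuclideanSpace ℝ (Fin n) → EuclideanSpace ℝ (Fin n))
    (H : EuclideanSpace ℝ (Fin n) → ℝ) (Ω : Set (EuclideanSpace ℝ (Fin n)))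
    (xs : EuclideanSpace ℝ (Fin n)) (S : Set (EuclideanSpace ℝ (Fin n))) : Prop :=
  ∀ N₁ ∈ 𝓝 xs, N₁ ⊆ Ω → ∃ N₂ ∈ 𝓝 xs, N₂ ⊆ N₁ ∧
    ∀ φ : ℝ → EuclideanSpace ℝ (Fin n), IsFilippovSol fL fR H Ω φ → φ 0 ∈ N₂ ∩ S →
      (∀ t : ℝ, 0 ≤ t → φ t ∈ N₁) ∧ Tendsto φ atTop (𝓝 xs)

lemma IsAsymptoticallyStableFrom.of_reaches
    (h_stable : IsAsymptoticallyStableFrom fL fR H Ω xs S)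
    (h_reach : ∀ N ∈ 𝓝 xs, ∃ N' ∈ 𝓝 xs, ∀ φ, IsFilippovSol fL fR H Ω φ → φ 0 ∈ N' →
      ∃ T ≥ 0, φ T ∈ S ∧ ∀ t ∈ Set.Icc 0 T, φ t ∈ N) :
    IsAsymptoticallyStableFrom fL fR H Ω xs Set.univ := by
  intro N₁ hN₁ hN₁Ω
  obtain ⟨N, hN, hNN₁, h_from_S⟩ := h_stable N₁ hN₁ hN₁Ω
  obtain ⟨N', hN', h_reach⟩ := h_reach N hN
  refine ⟨N' ∩ N₁, inter_mem hN' hN₁, Set.inter_subset_right, fun φ hφ h0 ↦ ?_⟩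
  obtain ⟨T, hT, hTS, hTN⟩ := h_reach φ hφ h0.1.1
  have h_start : φ (0 + T) ∈ N ∩ S := by
    rw [zero_add]
    exact ⟨hTN T ⟨hT, le_rfl⟩, hTS⟩
  obtain ⟨h_stay, h_tendsto⟩ := h_from_S _ (hφ.comp_add_right hT) h_start
  refine ⟨fun t ht ↦ ?_, ?_⟩
  · rcases le_total t T with htT | hTt
    · exact hNN₁ (hTN t ⟨ht, htT⟩)
    · simpa only [sub_add_cancel] using h_stay (t - T) (sub_nonneg.2 hTt)
  · simpa only [Function.comp_def, id, neg_add_cancel_right] using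
      h_tendsto.comp (tendsto_atTop_add_const_right atTop (-T) tendsto_id)

theorem attracting_sliding_asymptotically_stable_general (hΩ : Ω ∈ 𝓝 xs)
    (hfL : ContinuousAt fL xs) (hfR : ContinuousAt fR xs) (hH : HasStrictFDerivAt H L xs)
    (hxs : H xs = 0) (hL : 0 < L (fL xs)) (hR : L (fR xs) < 0)
    (hslide : IsAsymptoticallyStableFrom fL fR H Ω xs {x | H x = 0}) :
    (∀ N₁ ∈ 𝓝 xs, N₁ ⊆ Ω → ∃ N₂ ∈ 𝓝 xs, N₂ ⊆ N₁ ∧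
      ∀ φ : ℝ → EuclideanSpace ℝ (Fin n), IsFilippovSol fL fR H Ω φ →
        φ 0 ∈ N₂ → ∀ t : ℝ, 0 ≤ t → φ t ∈ N₁) ∧
    (∃ N₃ ∈ 𝓝 xs, ∀ φ : ℝ → EuclideanSpace ℝ (Fin n), IsFilippovSol fL fR H Ω φ →
      φ 0 ∈ N₃ → Tendsto φ atTop (𝓝 xs)) := by
  have h_stable : IsAsymptoticallyStableFrom fL fR H Ω xs Set.univ :=
    hslide.of_reaches fun _ hN ↦ exists_nhds_reaches_zero hfL hfR hH hxs hL hR hN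
  refine ⟨fun N₁ hN₁ hN₁Ω ↦ ?_, ?_⟩
  · obtain ⟨N₂, hN₂, hN₂N₁, h_sol⟩ := h_stable N₁ hN₁ hN₁Ω
    exact ⟨N₂, hN₂, hN₂N₁, fun φ hφ h0 ↦ (h_sol φ hφ ⟨h0, trivial⟩).1⟩
  · obtain ⟨N₃, hN₃, -, h_sol⟩ := h_stable Ω hΩ subset_rfl
    exact ⟨N₃, hN₃, fun φ hφ h0 ↦ (h_sol φ hφ ⟨h0, trivial⟩).2⟩

end Filippov

/-- Theorem (stability of admissible pseudo-equilibria, attracting case): if `x*` lies in an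
attracting sliding region and the sliding dynamics is asymptotically stable at `x*`,
then `x*` is an asymptotically stable equilibrium of the Filippov system. -/
theorem attracting_sliding_asymptotically_stable {n : ℕ}
    (Ω : Set (EuclideanSpace ℝ (Fin n))) (hΩ : IsOpen Ω)
    (fL fR : EuclideanSpace ℝ (Fin n) → EuclideanSpace ℝ (Fin n))
    (H : EuclideanSpace ℝ (Fin n) → ℝ)
    (hfL : ContDiff ℝ 1 fL) (hfR : ContDiff ℝ 1 fR) (hH : ContDiff ℝ 2 H)
    (xs : EuclideanSpace ℝ (Fin n)) (hxsΩ : xs ∈ Ω) (hxsSigma : H xs = 0)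
    (hgrad : fderiv ℝ H xs ≠ 0)
    (hL : lieD fL H xs > 0) (hR : lieD fR H xs < 0)
    (hslide : ∀ N₁ ∈ 𝓝 xs, N₁ ⊆ Ω → ∃ N₂ ∈ 𝓝 xs, N₂ ⊆ N₁ ∧
      ∀ φ : ℝ → EuclideanSpace ℝ (Fin n), IsFilippovSol fL fR H Ω φ →
        φ 0 ∈ N₂ ∩ {x | H x = 0} →
        (∀ t : ℝ, 0 ≤ t → φ t ∈ N₁) ∧ Tendsto φ atTop (𝓝 xs)) :
    (∀ N₁ ∈ 𝓝 xs, N₁ ⊆ Ω → ∃ N₂ ∈ 𝓝 xs, N₂ ⊆ N₁ ∧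
      ∀ φ : ℝ → EuclideanSpace ℝ (Fin n), IsFilippovSol fL fR H Ω φ →
        φ 0 ∈ N₂ → ∀ t : ℝ, 0 ≤ t → φ t ∈ N₁) ∧
    (∃ N₃ ∈ 𝓝 xs, ∀ φ : ℝ → EuclideanSpace ℝ (Fin n), IsFilippovSol fL fR H Ω φ →
      φ 0 ∈ N₃ → Tendsto φ atTop (𝓝 xs)) := by
  exact attracting_sliding_asymptotically_stable_general (hΩ.mem_nhds hxsΩ)
    hfL.continuous.continuousAt hfR.continuous.continuousAt
    (hH.contDiffAt.hasStrictFDerivAt two_ne_zero) hxsSigma hL hR hslide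
end

section
/- Let f^L, f^R : ℝⁿ → ℝⁿ be C³, H : ℝⁿ → ℝ be C⁴, and suppose there is a C² function α : ℝⁿ → ℝ with 𝓛_{f^L}H(x) − 𝓛_{f^R}H(x) = α(x)·H(x) for all x (so the system is second-order). Write V = 𝓛_{f^L}H. Let φ^L, φ^R : ℝ × ℝⁿ → ℝⁿ be global flows of f^L and f^R respectively, i.e. φ^Z(0,x) = x and ∂_t φ^Z(t,x) = f^Z(φ^Z(t,x)) for all t, x and Z ∈ {L,R}. Let x₀ satisfy H(x₀) = 0, V(x₀) = 0, 𝓛²_{f^L}H(x₀) > 0 and 𝓛²_{f^R}H(x₀) < 0 (an invisible–invisible tangency point). Then there exist δ > 0 and K > 0 such that: for every x with H(x) = 0, ‖x − x₀‖ < δ and ν := V(x) > 0, there exist τ_R > 0 and τ_L > 0 such that, setting x' = φ^R(τ_R, x), P = φ^L(τ_L, x') and τ = τ_R + τ_L, one has H(x') = 0 with H(φ^R(t,x)) > 0 for all t ∈ (0, τ_R); H(P) = 0 with H(φ^L(t,x')) < 0 for all t ∈ (0, τ_L); and the estimates |τ − 2(1/𝓛²_{f^L}H(x) − 1/𝓛²_{f^R}H(x))·ν|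 ≤ K ν², ‖P − x − 2(f^L(x)/𝓛²_{f^L}H(x) − f^R(x)/𝓛²_{f^R}H(x))·ν‖ ≤ K ν², and |V(P) − ν − (2Λ(x)/3)·ν²| ≤ K ν³, where Λ(x) = 𝓛³_{f^L}H(x)/(𝓛²_{f^L}H(x))² − 𝓛³_{f^R}H(x)/(𝓛²_{f^R}H(x))². -/
/-- Iterated Lie derivatives: `lieIter f h m = 𝓛_f^m h`, defined recursively by
`𝓛_f^0 h = h` and `𝓛_f^{m+1} h (x) = D(𝓛_f^m h)(x)[f(x)]`. -/
noncomputable def lieIter {n : ℕ} (f : EuclideanSpace ℝ (Fin n) → EuclideanSpace ℝ (Fin n))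
    (h : EuclideanSpace ℝ (Fin n) → ℝ) : ℕ → EuclideanSpace ℝ (Fin n) → ℝ
  | 0 => h
  | m + 1 => fun x => fderiv ℝ (lieIter f h m) x (f x)

/-!
Let `ν = 𝓛_f h > 0` be the normal velocity with which an orbit of `f` leaves `{h = 0}`, let
`a = 𝓛_f² h < 0` and `b = 𝓛_f³ h` at the point of departure, and let `τ` be the time of return to
`{h = 0}`. Short orbit arcs are concave in `h`, hence return exactly once, and `τ = O(ν)`. Taylor
expansion along the flow, uniformly in the starting point, turns `h = 0` at the return point into
`ν + aτ/2 + bτ²/6 = O(τ³)` after division by `τ`; so `τ = -2ν/a + O(ν²)`. Subtracting twice this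
relation from `ν' = ν + aτ + bτ²/2 + O(τ³)` eliminates the terms linear in `τ` and gives
`ν' = -ν + (2/3)(b/a²)ν² + O(ν³)` for the normal velocity `ν'` on return.

The return map is the composition of two such half-return maps, of `(fR, H)` and of `(fL, -H)`.
Because the system is second-order, `-ν'` is the normal velocity with which the second arc
starts. The coefficients of the second expansion may be moved back to the initial point, as the
first arc displaces it by `O(ν)` only.
-/

open Filter Topology Asymptotics Set

section LieDerivative

variable {E F : Type*} [NormedAddCommGroup E] [NormedSpace ℝ E]
  [NormedAddCommGroup F] [NormedSpace ℝ F] {f : E → E} {g : E → F} {x : E}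

/-- The Lie derivative `𝓛_f g` of a vector-valued function `g` along the vector field `f`. Higher
Lie derivatives are its iterates `(lieDeriv f)^[m] g`. -/
noncomputable def lieDeriv (f : E → E) (g : E → F) (x : E) : F :=
  fderiv ℝ g x (f x)

lemma lieIter_eq_iterate_lieDeriv {n : ℕ}
    (f : EuclideanSpace ℝ (Fin n) → EuclideanSpace ℝ (Fin n)) (h : EuclideanSpace ℝ (Fin n) → ℝ)
    (m : ℕ) : lieIter f h m = (lieDeriv f)^[m] h := by
  induction m with
  | zero => rfl
  | succ m ih => rw [Function.iterate_succ_apply', ← ih]; rfl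

lemma lieDeriv_id (f : E → E) : lieDeriv f id = f := by
  ext x
  simp [lieDeriv]

lemma iterate_lieDeriv_neg (f : E → E) (g : E → F) (m : ℕ) :
    (lieDeriv f)^[m] (-g) = -(lieDeriv f)^[m] g :=
  Function.Commute.iterate_left (g := Neg.neg) (fun g => by ext x; simp [lieDeriv, fderiv_neg]) m g

lemma lieDeriv_neg (f : E → E) (g : E → F) : lieDeriv f (-g) = -lieDeriv f g :=
  iterate_lieDeriv_neg f g 1

lemma contDiffAt_lieDeriv {n : WithTop ℕ∞} (hf : ContDiffAt ℝ n f x)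
    (hg : ContDiffAt ℝ (n + 1) g x) : ContDiffAt ℝ n (lieDeriv f g) x :=
  hg.fderiv_right_succ.clm_apply hf

lemma contDiffAt_iterate_lieDeriv {n k m : ℕ} (hf : ContDiffAt ℝ n f x)
    (hg : ContDiffAt ℝ (n + 1) g x) (hkm : k + m ≤ n + 1) :
    ContDiffAt ℝ k ((lieDeriv f)^[m] g) x := by
  induction m generalizing k with
  | zero => exact hg.of_le (mod_cast hkm)
  | succ m ih =>
    rw [Function.iterate_succ_apply']
    exact contDiffAt_lieDeriv (hf.of_le (mod_cast (by lia : k ≤ n)))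
      (mod_cast ih (k := k + 1) (by lia))

lemma eventually_differentiableAt {n : ℕ} (hg : ContDiffAt ℝ (n + 1) g x) :
    ∀ᶠ y in 𝓝 x, DifferentiableAt ℝ g y :=
  (hg.eventually (mod_cast WithTop.coe_ne_top)).mono fun _ hy => hy.differentiableAt (by simp)

end LieDerivative

section UniformInitialSegments

lemma eventually_forall_mem_Icc_prod {X : Type*} {l : Filter X} {p : ℝ × X → Prop}
    (hp : ∀ᶠ q in 𝓝[≥] (0 : ℝ) ×ˢ l, p q) :
    ∀ᶠ q in 𝓝[≥] (0 : ℝ) ×ˢ l, ∀ s ∈ Icc 0 q.1, p (s, q.2) := by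
  obtain ⟨pt, hpt, px, hpx, himp⟩ := eventually_prod_iff.1 hp
  have h0 : Tendsto (fun _ : ℝ => (0 : ℝ)) (𝓝[≥] 0) (𝓝[≥] 0) :=
    tendsto_const_pure.mono_right (pure_le_nhdsWithin self_mem_Ici)
  have hseg : ∀ᶠ t in 𝓝[≥] (0 : ℝ), ∀ s ∈ Icc 0 t, pt s :=
    (h0.Icc tendsto_id).eventually hpt.smallSets
  filter_upwards [hseg.prod_mk hpx] with q hq s hs using himp (hq.1 s hs) hq.2

lemma isBigO_pow_succ_of_hasDerivWithinAt {X F : Type*} [NormedAddCommGroup F] [NormedSpace ℝ F]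
    {l : Filter X} {G G' : ℝ → X → F} {k : ℕ} (hG₀ : ∀ᶠ x in l, G 0 x = 0)
    (hG : ∀ᶠ p : ℝ × X in 𝓝[≥] 0 ×ˢ l,
      HasDerivWithinAt (fun s => G s p.2) (G' p.1 p.2) (Ici 0) p.1)
    (hG' : (fun p : ℝ × X => G' p.1 p.2) =O[𝓝[≥] 0 ×ˢ l] fun p => p.1 ^ k) :
    (fun p : ℝ × X => G p.1 p.2) =O[𝓝[≥] 0 ×ˢ l] fun p => p.1 ^ (k + 1) := by
  obtain ⟨C, hC, hbound⟩ := hG'.exists_pos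
  refine .of_bound C ?_
  filter_upwards [eventually_forall_mem_Icc_prod (hG.and hbound.bound), tendsto_snd.eventually hG₀,
    tendsto_fst.eventually self_mem_nhdsWithin] with ⟨t, x⟩ hseg hx ht
  have ht₀ : 0 ≤ t := ht
  have hmvt := (convex_Icc 0 t).norm_image_sub_le_of_norm_hasDerivWithin_le (C := C * t ^ k)
    (fun s hs => (hseg s hs).1.mono Icc_subset_Ici_self)
    (fun s hs => (hseg s hs).2.trans ?_) (left_mem_Icc.2 ht₀) (right_mem_Icc.2 ht₀)
  · simpa [hx, abs_of_nonneg ht₀, pow_succ, mul_assoc] using hmvt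
  · have hs₀ : 0 ≤ s := hs.1
    have hst : s ≤ t := hs.2
    rw [Real.norm_of_nonneg (by positivity)]
    gcongr

end UniformInitialSegments

section LocalSemiflow

variable {E F : Type*} [NormedAddCommGroup E] [NormedSpace ℝ E]
  [NormedAddCommGroup F] [NormedSpace ℝ F]

/-- `φ` is a local forward-time flow of the vector field `f` near `x₀`: for every `x` close to `x₀`,
the curve `t ↦ φ t x` starts at `x` and solves `y' = f y` for small `t ≥ 0`, uniformly in `x`. The
derivative is one-sided at `t = 0` only, and no continuity in `x` is assumed. -/
structure IsLocalSemiflowAt (f : E → E) (φ : ℝ → E → E) (x₀ : E) : Prop where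
  map_zero : ∀ᶠ x in 𝓝 x₀, φ 0 x = x
  hasDerivWithinAt : ∀ᶠ p : ℝ × E in 𝓝[≥] 0 ×ˢ 𝓝 x₀,
    HasDerivWithinAt (fun s => φ s p.2) (f (φ p.1 p.2)) (Ici 0) p.1

/-- The remainder of the order-`k` Taylor expansion in time of `g` along the curves of `φ`, with
the coefficients `𝓛_f^i g` that these curves have when `φ` is a flow of `f`. -/
noncomputable def flowTaylorRemainder (f : E → E) (φ : ℝ → E → E) (g : E → F) (k : ℕ) (t : ℝ)
    (x : E) : F :=
  g (φ t x) - ∑ i ∈ Finset.range k, (t ^ i / i.factorial : ℝ) • (lieDeriv f)^[i] g x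

variable {f : E → E} {φ : ℝ → E → E} {g : E → F} {x₀ : E}

lemma flowTaylorRemainder_succ (k : ℕ) (t : ℝ) (x : E) :
    flowTaylorRemainder f φ g (k + 1) t x
      = flowTaylorRemainder f φ g k t x - (t ^ k / k.factorial : ℝ) • (lieDeriv f)^[k] g x := by
  simp only [flowTaylorRemainder, Finset.sum_range_succ, sub_sub]

lemma flowTaylorRemainder_one (t : ℝ) (x : E) :
    flowTaylorRemainder f φ g 1 t x = g (φ t x) - g x := by
  simp [flowTaylorRemainder]

lemma flowTaylorRemainder_two (t : ℝ) (x : E) :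
    flowTaylorRemainder f φ g 2 t x = g (φ t x) - g x - t • lieDeriv f g x := by
  simp [flowTaylorRemainder_succ 1, flowTaylorRemainder_one]

lemma flowTaylorRemainder_three (t : ℝ) (x : E) :
    flowTaylorRemainder f φ g 3 t x
      = g (φ t x) - g x - t • lieDeriv f g x - (t ^ 2 / 2) • (lieDeriv f)^[2] g x := by
  simp [flowTaylorRemainder_succ 2, flowTaylorRemainder_two]

lemma flowTaylorRemainder_four (t : ℝ) (x : E) :
    flowTaylorRemainder f φ g 4 t x
      = g (φ t x) - g x - t • lieDeriv f g x - (t ^ 2 / 2) • (lieDeriv f)^[2] g x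
        - (t ^ 3 / 6) • (lieDeriv f)^[3] g x := by
  simp [flowTaylorRemainder_succ 3, flowTaylorRemainder_three, Nat.factorial]

lemma flowTaylorRemainder_zero_left {k : ℕ} {x : E} (hx : φ 0 x = x) :
    flowTaylorRemainder f φ g (k + 1) 0 x = 0 := by
  simp [flowTaylorRemainder, Finset.sum_range_succ', hx]

lemma hasDerivWithinAt_flowTaylorRemainder {k : ℕ} {s : Set ℝ} {t : ℝ} {x : E}
    (h : HasDerivWithinAt (fun u => g (φ u x)) (lieDeriv f g (φ t x)) s t) :
    HasDerivWithinAt (fun u => flowTaylorRemainder f φ g (k + 1) u x)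
      (flowTaylorRemainder f φ (lieDeriv f g) k t x) s t := by
  have hmonomial (i : ℕ) : HasDerivWithinAt (fun u : ℝ => u ^ (i + 1) / (i + 1).factorial)
      (t ^ i / i.factorial) s t := by
    refine ((hasDerivWithinAt_pow (i + 1) t).div_const _).congr_deriv ?_
    rw [Nat.factorial_succ]
    push_cast
    field_simp
  have hsum := HasDerivWithinAt.fun_sum (u := Finset.range k) fun i _ =>
    (hmonomial i).smul_const ((lieDeriv f)^[i + 1] g x)
  simpa [flowTaylorRemainder, Finset.sum_range_succ'] using h.fun_sub (hsum.add_const (g x))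

namespace IsLocalSemiflowAt

lemma of_hasDerivAt (hφ₀ : ∀ x, φ 0 x = x)
    (hφ : ∀ t x, HasDerivAt (fun s => φ s x) (f (φ t x)) t) : IsLocalSemiflowAt f φ x₀ where
  map_zero := .of_forall hφ₀
  hasDerivWithinAt := .of_forall fun p => (hφ p.1 p.2).hasDerivWithinAt

lemma tendsto (hφ : IsLocalSemiflowAt f φ x₀) (hf : ContinuousAt f x₀) :
    Tendsto (fun p : ℝ × E => φ p.1 p.2) (𝓝[≥] 0 ×ˢ 𝓝 x₀) (𝓝 x₀) := by
  refine Metric.tendsto_nhds.2 fun ε hε => ?_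
  set M := ‖f x₀‖ + 1
  have hfM : ∀ᶠ y in 𝓝 x₀, ‖f y‖ < M := hf.norm.eventually_lt_const (lt_add_one _)
  obtain ⟨r, hr, hball⟩ := Metric.eventually_nhds_iff.1 (hfM.and (Metric.ball_mem_nhds x₀ hε))
  have hshort : ∀ᶠ t in 𝓝[≥] (0 : ℝ), M * t < r / 2 :=
    (by fun_prop : Continuous fun t : ℝ => M * t).continuousWithinAt.eventually_lt_const
      (by simpa using half_pos hr)
  have hstart : ∀ᶠ x in 𝓝 x₀, x ∈ Metric.ball x₀ (r / 2) ∧ φ 0 x = x :=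
    (Metric.eventually_nhds_iff_ball.2 ⟨r / 2, half_pos hr, fun _ => id⟩).and hφ.map_zero
  filter_upwards [eventually_forall_mem_Icc_prod hφ.hasDerivWithinAt, hshort.prod_mk hstart,
    tendsto_fst.eventually self_mem_nhdsWithin] with ⟨t, x⟩ hderiv ⟨htr, hxr, hx⟩ ht
  have ht₀ : 0 ≤ t := ht
  have hnear : ∀ s ∈ Icc 0 t, ‖φ s x - x‖ ≤ M * s → dist (φ s x) x₀ < r := by
    intro s hs hsx
    have hst : M * s ≤ M * t := mul_le_mul_of_nonneg_left hs.2 (by positivity)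
    have htri := dist_triangle (φ s x) x x₀
    rw [dist_eq_norm (φ s x) x] at htri
    linarith [Metric.mem_ball.1 hxr]
  -- The curve moves with speed less than `M` as long as it has not left the ball of radius `r`,
  -- and at that speed it stays in the ball up to time `t`.
  have hdrift : ∀ ⦃s⦄, s ∈ Icc 0 t → ‖φ s x - x‖ ≤ M * s :=
    image_norm_le_of_norm_deriv_right_lt_deriv_boundary (B' := fun _ => M)
      (fun s hs => ((hderiv s hs).sub_const x).continuousWithinAt.mono Icc_subset_Ici_self)
      (fun s hs => ((hderiv s (Ico_subset_Icc_self hs)).sub_const x).mono (Ici_subset_Ici.2 hs.1))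
      (by simp [hx]) (fun s => by simpa using (hasDerivAt_id s).const_mul M)
      fun s hs hsx => (hball (hnear s (Ico_subset_Icc_self hs) hsx.le)).1
  exact (hball (hnear t ⟨ht₀, le_rfl⟩ (hdrift ⟨ht₀, le_rfl⟩))).2

lemma hasDerivWithinAt_comp (hφ : IsLocalSemiflowAt f φ x₀) (hf : ContinuousAt f x₀)
    (hg : ∀ᶠ y in 𝓝 x₀, DifferentiableAt ℝ g y) :
    ∀ᶠ p : ℝ × E in 𝓝[≥] 0 ×ˢ 𝓝 x₀,
      HasDerivWithinAt (fun s => g (φ s p.2)) (lieDeriv f g (φ p.1 p.2)) (Ici 0) p.1 := by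
  filter_upwards [hφ.hasDerivWithinAt, (hφ.tendsto hf).eventually hg] with p hp hgp
  exact hgp.hasFDerivAt.comp_hasDerivWithinAt p.1 hp

lemma flowTaylorRemainder_isBigO_succ {k : ℕ} (hφ : IsLocalSemiflowAt f φ x₀)
    (hf : ContinuousAt f x₀) (hg : ∀ᶠ y in 𝓝 x₀, DifferentiableAt ℝ g y)
    (hR : (fun p : ℝ × E => flowTaylorRemainder f φ (lieDeriv f g) k p.1 p.2)
      =O[𝓝[≥] 0 ×ˢ 𝓝 x₀] fun p => p.1 ^ k) :
    (fun p : ℝ × E => flowTaylorRemainder f φ g (k + 1) p.1 p.2)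
      =O[𝓝[≥] 0 ×ˢ 𝓝 x₀] fun p => p.1 ^ (k + 1) :=
  isBigO_pow_succ_of_hasDerivWithinAt
    (hφ.map_zero.mono fun _ hx => flowTaylorRemainder_zero_left hx)
    ((hφ.hasDerivWithinAt_comp hf hg).mono fun _ hp => hasDerivWithinAt_flowTaylorRemainder hp) hR

theorem flowTaylorRemainder_isBigO {k : ℕ} (hφ : IsLocalSemiflowAt f φ x₀)
    (hf : ContDiffAt ℝ k f x₀) (hg : ContDiffAt ℝ (k + 1) g x₀) :
    (fun p : ℝ × E => flowTaylorRemainder f φ g (k + 1) p.1 p.2)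
      =O[𝓝[≥] 0 ×ˢ 𝓝 x₀] fun p => p.1 ^ (k + 1) := by
  induction k generalizing g with
  | zero =>
    refine hφ.flowTaylorRemainder_isBigO_succ hf.continuousAt (eventually_differentiableAt hg) ?_
    have hLg : ContinuousAt (lieDeriv f g) x₀ := (contDiffAt_lieDeriv hf hg).continuousAt
    simpa [flowTaylorRemainder, Function.comp_def] using
      (hLg.tendsto.comp (hφ.tendsto hf.continuousAt)).isBigO_one ℝ
  | succ k ih =>
    refine hφ.flowTaylorRemainder_isBigO_succ hf.continuousAt (eventually_differentiableAt hg) ?_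
    exact ih (hf.of_le (mod_cast k.le_succ)) (mod_cast contDiffAt_lieDeriv hf hg)

end IsLocalSemiflowAt

end LocalSemiflow

section HalfReturn

lemma isBigO_smul_of_continuousAt {X F : Type*} [TopologicalSpace X] [NormedAddCommGroup F]
    [NormedSpace ℝ F] {s : Set X} {x₀ : X} {c u : X → ℝ} {v : X → F}
    (hc : ContinuousAt c x₀) (hv : v =O[𝓝[s] x₀] u) :
    (fun x => c x • v x) =O[𝓝[s] x₀] u := by
  simpa using ((hc.tendsto.mono_left nhdsWithin_le_nhds).isBigO_one ℝ).smul hv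

lemma exists_zero_of_concaveOn {g : ℝ → ℝ} {v T : ℝ} (hg : ConcaveOn ℝ (Icc 0 T) g)
    (hcont : ContinuousOn g (Icc 0 T)) (hg₀ : g 0 = 0) (hv : 0 < v)
    (hderiv : HasDerivWithinAt g v (Ici 0) 0) (hT : 0 < T) (hgT : g T < 0) :
    ∃ τ ∈ Ioo 0 T, g τ = 0 ∧ ∀ t ∈ Ioo 0 τ, 0 < g t := by
  have hpos : ∀ᶠ s in 𝓝[>] (0 : ℝ), 0 < g s := by
    have hslope := hasDerivWithinAt_iff_tendsto_slope.1 hderiv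
    rw [Ici_sdiff_left] at hslope
    filter_upwards [hslope.eventually_const_lt hv, self_mem_nhdsWithin] with s hs hs₀
    have hs₀' : 0 < s := hs₀
    rw [slope_def_field, hg₀, sub_zero, sub_zero] at hs
    exact (div_pos_iff_of_pos_right hs₀').1 hs
  obtain ⟨s₁, hgs₁, hs₁⟩ := (hpos.and (Ioo_mem_nhdsGT hT)).exists
  obtain ⟨τ, ⟨hs₁τ, hτT⟩, hgτ⟩ := intermediate_value_Icc' hs₁.2.le
    (hcont.mono (Icc_subset_Icc_left hs₁.1.le)) ⟨hgT.le, hgs₁.le⟩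
  have hτ : τ ≠ T := by rintro rfl; exact hgT.ne hgτ
  refine ⟨τ, ⟨hs₁.1.trans_le hs₁τ, hτT.lt_of_ne hτ⟩, hgτ, fun t ht => ?_⟩
  obtain ⟨s, hgs, hs⟩ := (hpos.and (Ioo_mem_nhdsGT ht.1)).exists
  by_contra! hgt
  have hlt : g τ < g t := hg.lt_right_of_left_lt
    ⟨hs.1.le, (hs.2.trans ht.2).le.trans hτT⟩ ⟨(ht.1.trans ht.2).le, hτT⟩
    (by rw [openSegment_eq_Ioo (hs.2.trans ht.2)]; exact ⟨hs.2, ht.2⟩) (hgt.trans_lt hgs)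
  linarith

variable {E F : Type*} [NormedAddCommGroup E] [NormedSpace ℝ E]
  [NormedAddCommGroup F] [NormedSpace ℝ F]

/-- The part of the surface `{h = 0}` at which the vector field `f` points into `{h > 0}`. -/
def crossingSection (f : E → E) (h : E → ℝ) : Set E :=
  {x | h x = 0 ∧ 0 < lieDeriv f h x}

/-- `x₀` is an invisible fold of the vector field `f`, seen from the side `{h > 0}` of the surface
`{h = 0}`: the orbit of `f` through `x₀` is quadratically tangent to the surface and lies in
`{h < 0}`. The smoothness required is that of the second-order expansion of the half-return map. -/
structure IsInvisibleFoldAt (f : E → E) (h : E → ℝ) (x₀ : E) : Prop where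
  contDiffAt_field : ContDiffAt ℝ 3 f x₀
  contDiffAt_fun : ContDiffAt ℝ 4 h x₀
  fun_eq_zero : h x₀ = 0
  lieDeriv_eq_zero : lieDeriv f h x₀ = 0
  iterate_two_lieDeriv_neg : (lieDeriv f)^[2] h x₀ < 0

/-- The map that follows the curves of `φ` for the time `τ`; for `IsHalfReturnTimeAt f φ h x₀ τ` it
is the half-return map of the crossing section. -/
def halfReturnMap (φ : ℝ → E → E) (τ : E → ℝ) (x : E) : E :=
  φ (τ x) x

/-- `τ` is the time after which the curves of `φ` that leave `{h = 0}` near `x₀` into `{h > 0}`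
first come back to `{h = 0}`, a time of the order of the normal velocity at departure. -/
structure IsHalfReturnTimeAt (f : E → E) (φ : ℝ → E → E) (h : E → ℝ) (x₀ : E) (τ : E → ℝ) :
    Prop where
  pos : ∀ᶠ x in 𝓝[crossingSection f h] x₀, 0 < τ x
  fun_eq_zero : ∀ᶠ x in 𝓝[crossingSection f h] x₀, h (halfReturnMap φ τ x) = 0
  forall_pos : ∀ᶠ x in 𝓝[crossingSection f h] x₀, ∀ t ∈ Ioo 0 (τ x), 0 < h (φ t x)
  isBigO : τ =O[𝓝[crossingSection f h] x₀] lieDeriv f h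

variable {f : E → E} {φ : ℝ → E → E} {h : E → ℝ} {x₀ : E} {τ : E → ℝ}

lemma eventually_mem_crossingSection : ∀ᶠ x in 𝓝[crossingSection f h] x₀,
    h x = 0 ∧ 0 < lieDeriv f h x :=
  self_mem_nhdsWithin

namespace IsInvisibleFoldAt

lemma contDiffAt_iterate_lieDeriv {k m : ℕ} (hx₀ : IsInvisibleFoldAt f h x₀) (hkm : k + m ≤ 4) :
    ContDiffAt ℝ k ((lieDeriv f)^[m] h) x₀ :=
  _root_.contDiffAt_iterate_lieDeriv (n := 3) hx₀.contDiffAt_field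
    (mod_cast hx₀.contDiffAt_fun) hkm

lemma continuousAt_iterate_lieDeriv {m : ℕ} (hx₀ : IsInvisibleFoldAt f h x₀) (hm : m ≤ 4) :
    ContinuousAt ((lieDeriv f)^[m] h) x₀ :=
  (hx₀.contDiffAt_iterate_lieDeriv (k := 0) (by lia)).continuousAt

lemma tendsto_lieDeriv (hx₀ : IsInvisibleFoldAt f h x₀) :
    Tendsto (lieDeriv f h) (𝓝[crossingSection f h] x₀) (𝓝 0) := by
  rw [← hx₀.lieDeriv_eq_zero]
  exact (hx₀.continuousAt_iterate_lieDeriv (m := 1) (by simp)).continuousWithinAt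

lemma pow_isLittleO_pow {m n : ℕ} (hx₀ : IsInvisibleFoldAt f h x₀) (hmn : m < n) :
    (fun x => lieDeriv f h x ^ n) =o[𝓝[crossingSection f h] x₀] fun x => lieDeriv f h x ^ m :=
  (isLittleO_pow_pow hmn).comp_tendsto hx₀.tendsto_lieDeriv

lemma eventually_iterate_two_lieDeriv_neg (hx₀ : IsInvisibleFoldAt f h x₀) :
    ∀ᶠ x in 𝓝 x₀, (lieDeriv f)^[2] h x < 0 :=
  (hx₀.continuousAt_iterate_lieDeriv (by simp)).eventually_lt_const hx₀.iterate_two_lieDeriv_neg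

lemma tendsto_prodMk (hx₀ : IsInvisibleFoldAt f h x₀)
    (hpos : ∀ᶠ x in 𝓝[crossingSection f h] x₀, 0 < τ x)
    (hτ : τ =O[𝓝[crossingSection f h] x₀] lieDeriv f h) :
    Tendsto (fun x => (τ x, x)) (𝓝[crossingSection f h] x₀) (𝓝[≥] 0 ×ˢ 𝓝 x₀) :=
  (tendsto_nhdsWithin_iff.2 ⟨hτ.trans_tendsto hx₀.tendsto_lieDeriv,
    hpos.mono fun _ hx => hx.le⟩).prodMk (tendsto_id.mono_left nhdsWithin_le_nhds)

lemma flowTaylorRemainder_isBigO {k : ℕ} {g : E → F} (hx₀ : IsInvisibleFoldAt f h x₀)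
    (hφ : IsLocalSemiflowAt f φ x₀) (hpos : ∀ᶠ x in 𝓝[crossingSection f h] x₀, 0 < τ x)
    (hτ : τ =O[𝓝[crossingSection f h] x₀] lieDeriv f h) (hk : k ≤ 3)
    (hg : ContDiffAt ℝ (k + 1) g x₀) :
    (fun x => flowTaylorRemainder f φ g (k + 1) (τ x) x)
      =O[𝓝[crossingSection f h] x₀] fun x => τ x ^ (k + 1) :=
  (hφ.flowTaylorRemainder_isBigO (hx₀.contDiffAt_field.of_le (mod_cast hk)) hg).comp_tendsto
    (hx₀.tendsto_prodMk hpos hτ)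

lemma eventually_concaveOn (hx₀ : IsInvisibleFoldAt f h x₀) (hφ : IsLocalSemiflowAt f φ x₀) :
    ∀ᶠ p : ℝ × E in 𝓝[≥] 0 ×ˢ 𝓝 x₀, ConcaveOn ℝ (Icc 0 p.1) fun t => h (φ t p.2) := by
  have hf := hx₀.contDiffAt_field.continuousAt
  have hd (m : ℕ) (hm : 1 + m ≤ 4) := hφ.hasDerivWithinAt_comp hf
    (eventually_differentiableAt (n := 0)
      (mod_cast hx₀.contDiffAt_iterate_lieDeriv (k := 1) (m := m) hm))
  have hneg := (hφ.tendsto hf).eventually hx₀.eventually_iterate_two_lieDeriv_neg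
  filter_upwards [eventually_forall_mem_Icc_prod (((hd 0 (by simp)).and (hd 1 (by simp))).and hneg)]
    with ⟨T, x⟩ hseg
  have hsub {t : ℝ} (ht : t ∈ interior (Icc 0 T)) : t ∈ Icc 0 T := interior_subset ht
  have hIci : interior (Icc 0 T) ⊆ Ici (0 : ℝ) := interior_subset.trans Icc_subset_Ici_self
  exact concaveOn_of_hasDerivWithinAt2_nonpos (convex_Icc 0 T)
    (fun t ht => (hseg t ht).1.1.continuousWithinAt.mono Icc_subset_Ici_self)
    (fun t ht => (hseg t (hsub ht)).1.1.mono hIci) (fun t ht => (hseg t (hsub ht)).1.2.mono hIci)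
    fun t ht => (hseg t (hsub ht)).2.le

/-- The time is twice the leading-order return time `-2ν / 𝓛²h`. -/
lemma eventually_flow_neg (hx₀ : IsInvisibleFoldAt f h x₀) (hφ : IsLocalSemiflowAt f φ x₀) :
    ∀ᶠ x in 𝓝[crossingSection f h] x₀,
      h (φ (-4 / (lieDeriv f)^[2] h x₀ * lieDeriv f h x) x) < 0 := by
  set c := -4 / (lieDeriv f)^[2] h x₀ with hc
  have ha₀ := hx₀.iterate_two_lieDeriv_neg
  have hc₀ : 0 < c := div_pos_of_neg_of_neg (by norm_num) ha₀
  have hcO : (fun x => c * lieDeriv f h x) =O[𝓝[crossingSection f h] x₀] lieDeriv f h :=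
    isBigO_const_mul_self c _ _
  have hR := (hx₀.flowTaylorRemainder_isBigO (k := 2) hφ
    (eventually_mem_crossingSection.mono fun x hx => mul_pos hc₀ hx.2) hcO (by simp)
    (hx₀.contDiffAt_fun.of_le (by norm_num))).trans (hcO.pow 3)
  have hsmall := hR.trans_isLittleO (hx₀.pow_isLittleO_pow (by norm_num : 2 < 3))
  have hca : ∀ᶠ x in 𝓝[crossingSection f h] x₀, c * (lieDeriv f)^[2] h x < -3 :=
    ((hx₀.continuousAt_iterate_lieDeriv (m := 2) (by simp)).const_mul c).continuousWithinAt
      |>.eventually_lt_const (by simp only [hc, div_mul_cancel₀ _ ha₀.ne]; norm_num)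
  filter_upwards [hsmall.def (by positivity : 0 < c / 4), hca, eventually_mem_crossingSection]
    with x hx hcx ⟨hhx, hνx⟩
  have hexp : flowTaylorRemainder f φ h 3 (c * lieDeriv f h x) x
      = h (φ (c * lieDeriv f h x) x)
        - c * lieDeriv f h x ^ 2 * (1 + c * (lieDeriv f)^[2] h x / 2) := by
    simp only [flowTaylorRemainder_three, smul_eq_mul, hhx]
    ring
  have hmain : 0 < c * lieDeriv f h x ^ 2 := by positivity
  have hle := (le_abs_self _).trans hx
  simp only [hexp, norm_pow, Real.norm_eq_abs, sq_abs] at hle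
  nlinarith

theorem exists_isHalfReturnTimeAt (hx₀ : IsInvisibleFoldAt f h x₀)
    (hφ : IsLocalSemiflowAt f φ x₀) : ∃ τ, IsHalfReturnTimeAt f φ h x₀ τ := by
  set c := -4 / (lieDeriv f)^[2] h x₀
  have hc₀ : 0 < c := div_pos_of_neg_of_neg (by norm_num) hx₀.iterate_two_lieDeriv_neg
  have hT : Tendsto (fun x => (c * lieDeriv f h x, x)) (𝓝[crossingSection f h] x₀)
      (𝓝[≥] 0 ×ˢ 𝓝 x₀) :=
    hx₀.tendsto_prodMk (eventually_mem_crossingSection.mono fun x hx => mul_pos hc₀ hx.2)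
      (isBigO_const_mul_self c _ _)
  have hderiv := hφ.hasDerivWithinAt_comp hx₀.contDiffAt_field.continuousAt
    (eventually_differentiableAt (n := 3) (mod_cast hx₀.contDiffAt_fun))
  have hmap : ∀ᶠ x in 𝓝[crossingSection f h] x₀, φ 0 x = x :=
    nhdsWithin_le_nhds hφ.map_zero
  have hret : ∀ᶠ x in 𝓝[crossingSection f h] x₀, ∃ τ ∈ Ioo 0 (c * lieDeriv f h x),
      h (φ τ x) = 0 ∧ ∀ t ∈ Ioo 0 τ, 0 < h (φ t x) := by
    filter_upwards [hT.eventually (hx₀.eventually_concaveOn hφ), hx₀.eventually_flow_neg hφ,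
      hT.eventually (eventually_forall_mem_Icc_prod hderiv), hmap, eventually_mem_crossingSection]
      with x hconc hneg hd hx ⟨hhx, hνx⟩
    have hT₀ : 0 < c * lieDeriv f h x := mul_pos hc₀ hνx
    exact exists_zero_of_concaveOn hconc
      (fun t ht => (hd t ht).continuousWithinAt.mono Icc_subset_Ici_self) (by rw [hx, hhx]) hνx
      (by simpa only [hx] using hd 0 (left_mem_Icc.2 hT₀.le)) hT₀ hneg
  obtain ⟨s, hs, hτ⟩ := hret.exists_mem
  choose! τ hτT hzero hforall using hτ
  refine ⟨τ, mem_of_superset hs fun x hx => (hτT x hx).1, mem_of_superset hs hzero,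
    mem_of_superset hs hforall, .of_bound c ?_⟩
  filter_upwards [hs, eventually_mem_crossingSection] with x hx ⟨_, hνx⟩
  rw [Real.norm_of_nonneg (hτT x hx).1.le, Real.norm_of_nonneg hνx.le]
  exact (hτT x hx).2.le

end IsInvisibleFoldAt

namespace IsHalfReturnTimeAt

lemma tendsto_prodMk (hτ : IsHalfReturnTimeAt f φ h x₀ τ) (hx₀ : IsInvisibleFoldAt f h x₀) :
    Tendsto (fun x => (τ x, x)) (𝓝[crossingSection f h] x₀) (𝓝[≥] 0 ×ˢ 𝓝 x₀) :=
  hx₀.tendsto_prodMk hτ.pos hτ.isBigO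

lemma flowTaylorRemainder_isBigO {k : ℕ} {g : E → F} (hτ : IsHalfReturnTimeAt f φ h x₀ τ)
    (hx₀ : IsInvisibleFoldAt f h x₀) (hφ : IsLocalSemiflowAt f φ x₀) (hk : k ≤ 3)
    (hg : ContDiffAt ℝ (k + 1) g x₀) :
    (fun x => flowTaylorRemainder f φ g (k + 1) (τ x) x)
      =O[𝓝[crossingSection f h] x₀] fun x => lieDeriv f h x ^ (k + 1) :=
  (hx₀.flowTaylorRemainder_isBigO hφ hτ.pos hτ.isBigO hk hg).trans (hτ.isBigO.pow _)

/-- The vanishing of `h` at the return point, divided by the return time. -/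
lemma taylor_div_time_isBigO (hτ : IsHalfReturnTimeAt f φ h x₀ τ)
    (hx₀ : IsInvisibleFoldAt f h x₀) (hφ : IsLocalSemiflowAt f φ x₀) :
    (fun x => lieDeriv f h x + τ x / 2 * (lieDeriv f)^[2] h x + τ x ^ 2 / 6 * (lieDeriv f)^[3] h x)
      =O[𝓝[crossingSection f h] x₀] fun x => lieDeriv f h x ^ 3 := by
  have hR := (isBigO_refl (fun x => -(τ x)⁻¹) _).mul (hx₀.flowTaylorRemainder_isBigO (k := 3) hφ
    hτ.pos hτ.isBigO le_rfl (mod_cast hx₀.contDiffAt_fun))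
  refine IsBigO.trans (hR.congr' ?_ ?_) (hτ.isBigO.neg_left.pow 3)
  · filter_upwards [hτ.pos, hτ.fun_eq_zero, eventually_mem_crossingSection] with x hx hhφ ⟨hhx, _⟩
    rw [halfReturnMap] at hhφ
    simp only [Nat.reduceAdd, flowTaylorRemainder_four, smul_eq_mul, hhx, hhφ]
    field_simp
    ring
  · filter_upwards [hτ.pos] with x hx
    field_simp

lemma time_expansion (hτ : IsHalfReturnTimeAt f φ h x₀ τ) (hx₀ : IsInvisibleFoldAt f h x₀)
    (hφ : IsLocalSemiflowAt f φ x₀) :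
    (fun x => τ x + 2 * lieDeriv f h x / (lieDeriv f)^[2] h x)
      =O[𝓝[crossingSection f h] x₀] fun x => lieDeriv f h x ^ 2 := by
  have ha := hx₀.continuousAt_iterate_lieDeriv (m := 2) (by simp)
  have hb := hx₀.continuousAt_iterate_lieDeriv (m := 3) (by simp)
  have ha₀ := hx₀.iterate_two_lieDeriv_neg.ne
  have hD := (hτ.taylor_div_time_isBigO hx₀ hφ).trans
    (hx₀.pow_isLittleO_pow (by norm_num : 2 < 3)).isBigO
  have hlin := isBigO_smul_of_continuousAt (continuousAt_const (y := (2 : ℝ)).div ha ha₀) hD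
  have hquad := isBigO_smul_of_continuousAt
    (hb.div (ha.const_mul 3) (mul_ne_zero three_ne_zero ha₀)) (hτ.isBigO.pow 2)
  refine (hlin.sub hquad).congr' ?_ .rfl
  filter_upwards [nhdsWithin_le_nhds hx₀.eventually_iterate_two_lieDeriv_neg] with x hx
  have hx' := hx.ne
  simp only [smul_eq_mul, Pi.div_apply]
  field_simp
  ring

lemma halfReturnMap_sub_isBigO (hτ : IsHalfReturnTimeAt f φ h x₀ τ) (hx₀ : IsInvisibleFoldAt f h x₀)
    (hφ : IsLocalSemiflowAt f φ x₀) :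
    (fun x => halfReturnMap φ τ x - x) =O[𝓝[crossingSection f h] x₀] lieDeriv f h := by
  simpa [flowTaylorRemainder_one, halfReturnMap] using
    hτ.flowTaylorRemainder_isBigO (k := 0) (g := id) hx₀ hφ (by simp) contDiffAt_id

lemma halfReturnMap_expansion (hτ : IsHalfReturnTimeAt f φ h x₀ τ) (hx₀ : IsInvisibleFoldAt f h x₀)
    (hφ : IsLocalSemiflowAt f φ x₀) :
    (fun x => halfReturnMap φ τ x - x + (2 * lieDeriv f h x / (lieDeriv f)^[2] h x) • f x)
      =O[𝓝[crossingSection f h] x₀] fun x => lieDeriv f h x ^ 2 := by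
  have hf := (hx₀.contDiffAt_field.continuousAt.tendsto.mono_left nhdsWithin_le_nhds).isBigO_one ℝ
    (l := 𝓝[crossingSection f h] x₀)
  have hR := hτ.flowTaylorRemainder_isBigO (k := 1) (g := id) hx₀ hφ (by simp) contDiffAt_id
  have hT : (fun x => (τ x + 2 * lieDeriv f h x / (lieDeriv f)^[2] h x) • f x)
      =O[𝓝[crossingSection f h] x₀] fun x => lieDeriv f h x ^ 2 := by
    simpa using (hτ.time_expansion hx₀ hφ).smul hf
  refine (hR.add hT).congr_left fun x => ?_
  simp only [Nat.reduceAdd, flowTaylorRemainder_two, halfReturnMap, lieDeriv_id, id]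
  module

lemma lieDeriv_halfReturnMap_expansion (hτ : IsHalfReturnTimeAt f φ h x₀ τ)
    (hx₀ : IsInvisibleFoldAt f h x₀) (hφ : IsLocalSemiflowAt f φ x₀) :
    (fun x => lieDeriv f h (halfReturnMap φ τ x) + lieDeriv f h x
        - 2 / 3 * ((lieDeriv f)^[3] h x / (lieDeriv f)^[2] h x ^ 2) * lieDeriv f h x ^ 2)
      =O[𝓝[crossingSection f h] x₀] fun x => lieDeriv f h x ^ 3 := by
  have ha := hx₀.continuousAt_iterate_lieDeriv (m := 2) (by simp)
  have hb := hx₀.continuousAt_iterate_lieDeriv (m := 3) (by simp)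
  have ha₀ := hx₀.iterate_two_lieDeriv_neg.ne
  have hR := hτ.flowTaylorRemainder_isBigO (k := 2) (g := lieDeriv f h) hx₀ hφ (by simp)
    (hx₀.contDiffAt_iterate_lieDeriv (k := 3) (m := 1) (by simp))
  have hD := (hτ.taylor_div_time_isBigO hx₀ hφ).const_mul_left 2
  have htime := hτ.time_expansion hx₀ hφ
  have hleading : (fun x => 2 * lieDeriv f h x / (lieDeriv f)^[2] h x)
      =O[𝓝[crossingSection f h] x₀] lieDeriv f h :=
    (isBigO_smul_of_continuousAt (continuousAt_const (y := (2 : ℝ)).div ha ha₀)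
      (isBigO_refl (lieDeriv f h) _)).congr_left fun x => by
        simp only [smul_eq_mul, Pi.div_apply]; ring
  -- Only `τ² - 4ν² / (𝓛²h)²`, a difference of squares, needs the expansion of the return time.
  have hsquares := isBigO_smul_of_continuousAt (hb.div_const 6)
    (htime.mul (hτ.isBigO.sub hleading))
  have hsum := (hR.add hD).add (hsquares.congr_right fun x => by ring)
  refine hsum.congr_left fun x => ?_
  simp only [Nat.reduceAdd, flowTaylorRemainder_three, halfReturnMap, smul_eq_mul,
    Function.iterate_succ_apply, Function.iterate_zero_apply]
  ring

lemma lieDeriv_halfReturnMap_add_isBigO (hτ : IsHalfReturnTimeAt f φ h x₀ τ)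
    (hx₀ : IsInvisibleFoldAt f h x₀) (hφ : IsLocalSemiflowAt f φ x₀) :
    (fun x => lieDeriv f h (halfReturnMap φ τ x) + lieDeriv f h x)
      =O[𝓝[crossingSection f h] x₀] fun x => lieDeriv f h x ^ 2 := by
  have hcoeff : ContinuousAt
      (fun x => 2 / 3 * ((lieDeriv f)^[3] h x / (lieDeriv f)^[2] h x ^ 2)) x₀ :=
    ((hx₀.continuousAt_iterate_lieDeriv (by simp)).div
      ((hx₀.continuousAt_iterate_lieDeriv (by simp)).pow 2)
      (pow_ne_zero 2 hx₀.iterate_two_lieDeriv_neg.ne)).const_mul _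
  simpa using ((hτ.lieDeriv_halfReturnMap_expansion hx₀ hφ).trans
    (hx₀.pow_isLittleO_pow (by norm_num : 2 < 3)).isBigO).add
    (isBigO_smul_of_continuousAt hcoeff (isBigO_refl (fun x => lieDeriv f h x ^ 2) _))

lemma tendsto_halfReturnMap (hτ : IsHalfReturnTimeAt f φ h x₀ τ)
    (hx₀ : IsInvisibleFoldAt f h x₀) (hφ : IsLocalSemiflowAt f φ x₀) :
    Tendsto (halfReturnMap φ τ) (𝓝[crossingSection f h] x₀) (𝓝 x₀) :=
  (hφ.tendsto hx₀.contDiffAt_field.continuousAt).comp (hτ.tendsto_prodMk hx₀)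

lemma comp_halfReturnMap_sub_isBigO {q : E → F} (hτ : IsHalfReturnTimeAt f φ h x₀ τ)
    (hx₀ : IsInvisibleFoldAt f h x₀) (hφ : IsLocalSemiflowAt f φ x₀) (hq : ContDiffAt ℝ 1 q x₀) :
    (fun x => q (halfReturnMap φ τ x) - q x) =O[𝓝[crossingSection f h] x₀] lieDeriv f h :=
  ((hq.hasStrictFDerivAt one_ne_zero).isBigO_sub.comp_tendsto
    ((hτ.tendsto_halfReturnMap hx₀ hφ).prodMk_nhds (tendsto_id.mono_left nhdsWithin_le_nhds))).trans
    (hτ.halfReturnMap_sub_isBigO hx₀ hφ)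

end IsHalfReturnTimeAt

end HalfReturn

section FullReturn

variable {E F : Type*} [NormedAddCommGroup E] [NormedSpace ℝ E]
  [NormedAddCommGroup F] [NormedSpace ℝ F]

/-- `x₀` is an invisible–invisible tangency of the second-order Filippov system that follows `fR` in
`{H > 0}` and `fL` in `{H < 0}`. Second-order means that the two velocities normal to the surface
`{H = 0}` agree on it. -/
structure IsInvisibleTwoFoldAt (fL fR : E → E) (H : E → ℝ) (x₀ : E) : Prop where
  right : IsInvisibleFoldAt fR H x₀
  left : IsInvisibleFoldAt fL (-H) x₀
  lieDeriv_eq : ∀ᶠ x in 𝓝 x₀, H x = 0 → lieDeriv fL H x = lieDeriv fR H x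

variable {fL fR : E → E} {φL φR : ℝ → E → E} {H : E → ℝ} {x₀ : E} {τL τR : E → ℝ}

namespace IsInvisibleTwoFoldAt

lemma of_lieDeriv_sub_eq_mul {α : E → ℝ} (hfL : ContDiffAt ℝ 3 fL x₀) (hfR : ContDiffAt ℝ 3 fR x₀)
    (hH : ContDiffAt ℝ 4 H x₀)
    (hso : ∀ᶠ x in 𝓝 x₀, lieDeriv fL H x - lieDeriv fR H x = α x * H x) (hHx₀ : H x₀ = 0)
    (hVx₀ : lieDeriv fL H x₀ = 0) (hinvL : 0 < (lieDeriv fL)^[2] H x₀)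
    (hinvR : (lieDeriv fR)^[2] H x₀ < 0) : IsInvisibleTwoFoldAt fL fR H x₀ where
  right := ⟨hfR, hH, hHx₀, by simpa [hVx₀, hHx₀] using hso.self_of_nhds, hinvR⟩
  left := ⟨hfL, hH.neg, by simp [hHx₀], by simp [lieDeriv_neg, hVx₀],
    by rw [iterate_lieDeriv_neg]; exact neg_neg_of_pos hinvL⟩
  lieDeriv_eq := hso.mono fun x hx hHx => by simpa [hHx, sub_eq_zero] using hx

lemma lieDeriv_left_halfReturnMap (hx₀ : IsInvisibleTwoFoldAt fL fR H x₀)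
    (hφR : IsLocalSemiflowAt fR φR x₀) (hτR : IsHalfReturnTimeAt fR φR H x₀ τR) :
    ∀ᶠ x in 𝓝[crossingSection fR H] x₀, lieDeriv fL (-H) (halfReturnMap φR τR x)
      = -lieDeriv fR H (halfReturnMap φR τR x) := by
  filter_upwards [hτR.fun_eq_zero,
    (hτR.tendsto_halfReturnMap hx₀.right hφR).eventually hx₀.lieDeriv_eq] with x hx hglue
  rw [lieDeriv_neg, Pi.neg_apply, hglue hx]

lemma tendsto_halfReturnMap (hx₀ : IsInvisibleTwoFoldAt fL fR H x₀)
    (hφR : IsLocalSemiflowAt fR φR x₀) (hτR : IsHalfReturnTimeAt fR φR H x₀ τR) :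
    Tendsto (halfReturnMap φR τR) (𝓝[crossingSection fR H] x₀) (𝓝[crossingSection fL (-H)] x₀) := by
  refine tendsto_nhdsWithin_iff.2 ⟨hτR.tendsto_halfReturnMap hx₀.right hφR, ?_⟩
  have hsmall := (hτR.lieDeriv_halfReturnMap_add_isBigO hx₀.right hφR).trans_isLittleO
    (hx₀.right.pow_isLittleO_pow (by norm_num : 1 < 2))
  filter_upwards [hx₀.lieDeriv_left_halfReturnMap hφR hτR, hτR.fun_eq_zero, hsmall.def one_half_pos,
    eventually_mem_crossingSection] with x hleft hx hν ⟨_, hνx⟩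
  refine ⟨neg_eq_zero.2 hx, ?_⟩
  have hle := (le_abs_self _).trans hν
  rw [pow_one, Real.norm_of_nonneg hνx.le] at hle
  linarith

lemma lieDeriv_left_halfReturnMap_sub_isBigO (hx₀ : IsInvisibleTwoFoldAt fL fR H x₀)
    (hφR : IsLocalSemiflowAt fR φR x₀) (hτR : IsHalfReturnTimeAt fR φR H x₀ τR) :
    (fun x => lieDeriv fL (-H) (halfReturnMap φR τR x) - lieDeriv fR H x)
      =O[𝓝[crossingSection fR H] x₀] fun x => lieDeriv fR H x ^ 2 := by
  refine (hτR.lieDeriv_halfReturnMap_add_isBigO hx₀.right hφR).neg_left.congr' ?_ .rfl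
  filter_upwards [hx₀.lieDeriv_left_halfReturnMap hφR hτR] with x hx
  rw [hx]
  ring

lemma lieDeriv_left_halfReturnMap_isBigO (hx₀ : IsInvisibleTwoFoldAt fL fR H x₀)
    (hφR : IsLocalSemiflowAt fR φR x₀) (hτR : IsHalfReturnTimeAt fR φR H x₀ τR) :
    (fun x => lieDeriv fL (-H) (halfReturnMap φR τR x))
      =O[𝓝[crossingSection fR H] x₀] lieDeriv fR H := by
  have hsub := (hx₀.lieDeriv_left_halfReturnMap_sub_isBigO hφR hτR).trans
    (hx₀.right.pow_isLittleO_pow (by norm_num : 1 < 2)).isBigO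
  simp only [pow_one] at hsub
  exact (hsub.add (isBigO_refl _ _)).congr_left fun x => sub_add_cancel _ _

lemma comp_halfReturnMap_isBigO {G : Type*} [NormedAddCommGroup G] {u : E → G} {n : ℕ}
    (hx₀ : IsInvisibleTwoFoldAt fL fR H x₀) (hφR : IsLocalSemiflowAt fR φR x₀)
    (hτR : IsHalfReturnTimeAt fR φR H x₀ τR)
    (hu : u =O[𝓝[crossingSection fL (-H)] x₀] fun y => lieDeriv fL (-H) y ^ n) :
    (fun x => u (halfReturnMap φR τR x))
      =O[𝓝[crossingSection fR H] x₀] fun x => lieDeriv fR H x ^ n :=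
  (hu.comp_tendsto (hx₀.tendsto_halfReturnMap hφR hτR)).trans
    ((hx₀.lieDeriv_left_halfReturnMap_isBigO hφR hτR).pow n)

lemma pow_smul_comp_sub_isBigO {q : E → F} (n : ℕ) (hx₀ : IsInvisibleTwoFoldAt fL fR H x₀)
    (hφR : IsLocalSemiflowAt fR φR x₀) (hτR : IsHalfReturnTimeAt fR φR H x₀ τR)
    (hq : ContDiffAt ℝ 1 q x₀) :
    (fun x => lieDeriv fL (-H) (halfReturnMap φR τR x) ^ n • q (halfReturnMap φR τR x)
        - lieDeriv fR H x ^ n • q x)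
      =O[𝓝[crossingSection fR H] x₀] fun x => lieDeriv fR H x ^ (n + 1) := by
  induction n with
  | zero => simpa using hτR.comp_halfReturnMap_sub_isBigO hx₀.right hφR hq
  | succ n ih =>
    have hpow := (hx₀.lieDeriv_left_halfReturnMap_isBigO hφR hτR).pow n
    have hq₁ : (fun x => q (halfReturnMap φR τR x)) =O[𝓝[crossingSection fR H] x₀]
        fun _ => (1 : ℝ) :=
      (hq.continuousAt.tendsto.comp (hτR.tendsto_halfReturnMap hx₀.right hφR)).isBigO_one ℝ
    refine (((hx₀.lieDeriv_left_halfReturnMap_sub_isBigO hφR hτR).smul (hpow.smul hq₁)).add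
      (((isBigO_refl (lieDeriv fR H) _).smul ih).congr_right fun x => ?_)).congr
        (fun x => ?_) fun x => ?_
    · simp only [smul_eq_mul]
      ring
    · simp only [pow_succ']
      module
    · simp only [smul_eq_mul]
      ring

theorem time_expansion (hx₀ : IsInvisibleTwoFoldAt fL fR H x₀) (hφL : IsLocalSemiflowAt fL φL x₀)
    (hφR : IsLocalSemiflowAt fR φR x₀) (hτL : IsHalfReturnTimeAt fL φL (-H) x₀ τL)
    (hτR : IsHalfReturnTimeAt fR φR H x₀ τR) :
    (fun x => τR x + τL (halfReturnMap φR τR x)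
        - 2 * (1 / (lieDeriv fL)^[2] H x - 1 / (lieDeriv fR)^[2] H x) * lieDeriv fR H x)
      =O[𝓝[crossingSection fR H] x₀] fun x => lieDeriv fR H x ^ 2 := by
  have hq : ContDiffAt ℝ 1 (fun x => 2 / (lieDeriv fL)^[2] (-H) x) x₀ :=
    contDiffAt_const.div (hx₀.left.contDiffAt_iterate_lieDeriv (by simp))
      hx₀.left.iterate_two_lieDeriv_neg.ne
  have hleft := hx₀.comp_halfReturnMap_isBigO hφR hτR (hτL.time_expansion hx₀.left hφL)
  refine (((hτR.time_expansion hx₀.right hφR).add hleft).sub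
    (hx₀.pow_smul_comp_sub_isBigO 1 hφR hτR hq)).congr_left fun x => ?_
  simp only [iterate_lieDeriv_neg, Pi.neg_apply, smul_eq_mul]
  ring

theorem returnMap_expansion (hx₀ : IsInvisibleTwoFoldAt fL fR H x₀)
    (hφL : IsLocalSemiflowAt fL φL x₀) (hφR : IsLocalSemiflowAt fR φR x₀)
    (hτL : IsHalfReturnTimeAt fL φL (-H) x₀ τL)
    (hτR : IsHalfReturnTimeAt fR φR H x₀ τR) :
    (fun x => halfReturnMap φL τL (halfReturnMap φR τR x) - x
        - ((2 * lieDeriv fR H x / (lieDeriv fL)^[2] H x) • fL x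
          - (2 * lieDeriv fR H x / (lieDeriv fR)^[2] H x) • fR x))
      =O[𝓝[crossingSection fR H] x₀] fun x => lieDeriv fR H x ^ 2 := by
  have hq : ContDiffAt ℝ 1 (fun x => (2 / (lieDeriv fL)^[2] (-H) x) • fL x) x₀ :=
    (contDiffAt_const.div (hx₀.left.contDiffAt_iterate_lieDeriv (by simp))
      hx₀.left.iterate_two_lieDeriv_neg.ne).smul (hx₀.left.contDiffAt_field.of_le (by norm_num))
  have hleft := hx₀.comp_halfReturnMap_isBigO hφR hτR (hτL.halfReturnMap_expansion hx₀.left hφL)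
  refine (((hτR.halfReturnMap_expansion hx₀.right hφR).add hleft).sub
    (hx₀.pow_smul_comp_sub_isBigO 1 hφR hτR hq)).congr_left fun x => ?_
  simp only [iterate_lieDeriv_neg, Pi.neg_apply, pow_one]
  module

theorem lieDeriv_returnMap_expansion (hx₀ : IsInvisibleTwoFoldAt fL fR H x₀)
    (hφL : IsLocalSemiflowAt fL φL x₀) (hφR : IsLocalSemiflowAt fR φR x₀)
    (hτL : IsHalfReturnTimeAt fL φL (-H) x₀ τL)
    (hτR : IsHalfReturnTimeAt fR φR H x₀ τR) :
    (fun x => lieDeriv fL H (halfReturnMap φL τL (halfReturnMap φR τR x)) - lieDeriv fR H x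
        - 2 * ((lieDeriv fL)^[3] H x / (lieDeriv fL)^[2] H x ^ 2
          - (lieDeriv fR)^[3] H x / (lieDeriv fR)^[2] H x ^ 2) / 3 * lieDeriv fR H x ^ 2)
      =O[𝓝[crossingSection fR H] x₀] fun x => lieDeriv fR H x ^ 3 := by
  have hq : ContDiffAt ℝ 1
      (fun x => 2 / 3 * ((lieDeriv fL)^[3] (-H) x / (lieDeriv fL)^[2] (-H) x ^ 2)) x₀ :=
    contDiffAt_const.mul ((hx₀.left.contDiffAt_iterate_lieDeriv (by simp)).div
      ((hx₀.left.contDiffAt_iterate_lieDeriv (by simp)).pow 2)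
      (pow_ne_zero 2 hx₀.left.iterate_two_lieDeriv_neg.ne))
  have hleft := hx₀.comp_halfReturnMap_isBigO hφR hτR
    (hτL.lieDeriv_halfReturnMap_expansion hx₀.left hφL)
  refine (((hτR.lieDeriv_halfReturnMap_expansion hx₀.right hφR).neg_left.sub hleft).sub
    (hx₀.pow_smul_comp_sub_isBigO 2 hφR hτR hq)).congr' ?_ .rfl
  filter_upwards [hx₀.lieDeriv_left_halfReturnMap hφR hτR] with x hx
  rw [hx]
  simp only [lieDeriv_neg, iterate_lieDeriv_neg, Pi.neg_apply, smul_eq_mul]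
  ring

end IsInvisibleTwoFoldAt

theorem crossing_return_map_asymptotics_general (hx₀ : IsInvisibleTwoFoldAt fL fR H x₀)
    (hφL : IsLocalSemiflowAt fL φL x₀) (hφR : IsLocalSemiflowAt fR φR x₀) :
    ∃ δ > (0 : ℝ), ∃ K > (0 : ℝ), ∀ x, H x = 0 → ‖x - x₀‖ < δ → 0 < lieDeriv fL H x →
      ∃ τR > (0 : ℝ), ∃ τL > (0 : ℝ),
        H (φR τR x) = 0 ∧
        (∀ t ∈ Ioo 0 τR, 0 < H (φR t x)) ∧
        H (φL τL (φR τR x)) = 0 ∧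
        (∀ t ∈ Ioo 0 τL, H (φL t (φR τR x)) < 0) ∧
        |(τR + τL) - 2 * (1 / (lieDeriv fL)^[2] H x - 1 / (lieDeriv fR)^[2] H x) * lieDeriv fL H x|
          ≤ K * lieDeriv fL H x ^ 2 ∧
        ‖φL τL (φR τR x) - x - ((2 * lieDeriv fL H x / (lieDeriv fL)^[2] H x) • fL x -
            (2 * lieDeriv fL H x / (lieDeriv fR)^[2] H x) • fR x)‖
          ≤ K * lieDeriv fL H x ^ 2 ∧
        |lieDeriv fL H (φL τL (φR τR x)) - lieDeriv fL H x -
            (2 * ((lieDeriv fL)^[3] H x / (lieDeriv fL)^[2] H x ^ 2 -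
              (lieDeriv fR)^[3] H x / (lieDeriv fR)^[2] H x ^ 2) / 3) * lieDeriv fL H x ^ 2|
          ≤ K * lieDeriv fL H x ^ 3 := by
  obtain ⟨τR, hτR⟩ := hx₀.right.exists_isHalfReturnTimeAt hφR
  obtain ⟨τL, hτL⟩ := hx₀.left.exists_isHalfReturnTimeAt hφL
  have hz := hx₀.tendsto_halfReturnMap hφR hτR
  obtain ⟨K, ⟨⟨htime, hposition⟩, hvelocity⟩, hK⟩ :=
    (((isBigO_iff_eventually_isBigOWith.1 (hx₀.time_expansion hφL hφR hτL hτR)).and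
      (isBigO_iff_eventually_isBigOWith.1 (hx₀.returnMap_expansion hφL hφR hτL hτR))).and
      (isBigO_iff_eventually_isBigOWith.1 (hx₀.lieDeriv_returnMap_expansion hφL hφR hτL hτR))).and
      (eventually_gt_atTop 0) |>.exists
  have hright := hτR.pos.and (hτR.fun_eq_zero.and hτR.forall_pos)
  have hleft := hz.eventually (hτL.pos.and (hτL.fun_eq_zero.and hτL.forall_pos))
  have hbounds := htime.bound.and (hposition.bound.and hvelocity.bound)
  obtain ⟨δ, hδ, hall⟩ := Metric.eventually_nhds_iff.1 (hx₀.lieDeriv_eq.and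
    (eventually_nhdsWithin_iff.1 (hright.and (hleft.and hbounds))))
  refine ⟨δ, hδ, K, hK, fun x hHx hxδ hν => ?_⟩
  obtain ⟨hV, hcross⟩ := hall (by rwa [dist_eq_norm])
  rw [hV hHx] at hν ⊢
  obtain ⟨⟨hτRx, hR, hRpos⟩, ⟨hτLx, hL, hLpos⟩, ht, hp, hv⟩ := hcross ⟨hHx, hν⟩
  rw [Real.norm_of_nonneg (pow_nonneg hν.le _)] at ht hp hv
  exact ⟨τR x, hτRx, τL _, hτLx, hR, hRpos, neg_eq_zero.1 hL, fun s hs => neg_pos.1 (hLpos s hs),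
    ht, hp, hv⟩

end FullReturn

/-- Return-map asymptotics for one revolution of a crossing orbit around an
invisible–invisible tangency point of a second-order Filippov system: the orbit follows
`f^R` through `{H > 0}`, returns to `{H = 0}`, then follows `f^L` through `{H < 0}` and
returns again, with total time `τ`, return point `P`, and return value of `V = 𝓛_{f^L}H`
satisfying the stated estimates in `ν = V(x)`, where
`Λ(x) = 𝓛³_{f^L}H(x)/(𝓛²_{f^L}H(x))² − 𝓛³_{f^R}H(x)/(𝓛²_{f^R}H(x))²`. -/
theorem crossing_return_map_asymptotics {n : ℕ}
    (fL fR : EuclideanSpace ℝ (Fin n) → EuclideanSpace ℝ (Fin n))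
    (H : EuclideanSpace ℝ (Fin n) → ℝ) (α : EuclideanSpace ℝ (Fin n) → ℝ)
    (hfL : ContDiff ℝ 3 fL) (hfR : ContDiff ℝ 3 fR) (hH : ContDiff ℝ 4 H)
    (hα : ContDiff ℝ 2 α)
    (hso : ∀ x, lieIter fL H 1 x - lieIter fR H 1 x = α x * H x)
    (φL φR : ℝ → EuclideanSpace ℝ (Fin n) → EuclideanSpace ℝ (Fin n))
    (hφL0 : ∀ x, φL 0 x = x) (hφR0 : ∀ x, φR 0 x = x)
    (hφL : ∀ t x, HasDerivAt (fun s => φL s x) (fL (φL t x)) t)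
    (hφR : ∀ t x, HasDerivAt (fun s => φR s x) (fR (φR t x)) t)
    (x₀ : EuclideanSpace ℝ (Fin n)) (hHx₀ : H x₀ = 0) (hVx₀ : lieIter fL H 1 x₀ = 0)
    (hinvL : 0 < lieIter fL H 2 x₀) (hinvR : lieIter fR H 2 x₀ < 0) :
    ∃ δ > (0:ℝ), ∃ K > (0:ℝ), ∀ x : EuclideanSpace ℝ (Fin n), H x = 0 → ‖x - x₀‖ < δ →
      0 < lieIter fL H 1 x →
      ∃ τR > (0:ℝ), ∃ τL > (0:ℝ),
        H (φR τR x) = 0 ∧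
        (∀ t ∈ Set.Ioo (0:ℝ) τR, 0 < H (φR t x)) ∧
        H (φL τL (φR τR x)) = 0 ∧
        (∀ t ∈ Set.Ioo (0:ℝ) τL, H (φL t (φR τR x)) < 0) ∧
        |(τR + τL) - 2 * (1 / lieIter fL H 2 x - 1 / lieIter fR H 2 x) * lieIter fL H 1 x|
          ≤ K * (lieIter fL H 1 x) ^ 2 ∧
        ‖φL τL (φR τR x) - x -
            ((2 * lieIter fL H 1 x / lieIter fL H 2 x) • fL x -
              (2 * lieIter fL H 1 x / lieIter fR H 2 x) • fR x)‖
          ≤ K * (lieIter fL H 1 x) ^ 2 ∧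
        |lieIter fL H 1 (φL τL (φR τR x)) - lieIter fL H 1 x -
            (2 * (lieIter fL H 3 x / (lieIter fL H 2 x) ^ 2 -
              lieIter fR H 3 x / (lieIter fR H 2 x) ^ 2) / 3) * (lieIter fL H 1 x) ^ 2|
          ≤ K * (lieIter fL H 1 x) ^ 3 := by
  simp only [lieIter_eq_iterate_lieDeriv] at *
  exact crossing_return_map_asymptotics_general
    (.of_lieDeriv_sub_eq_mul hfL.contDiffAt hfR.contDiffAt hH.contDiffAt (.of_forall hso) hHx₀ hVx₀
      hinvL hinvR) (.of_hasDerivAt hφL0 hφL) (.of_hasDerivAt hφR0 hφR)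
end

section
/- Let β₀ > 0, M₁ > 0, M₃ ≥ M₁/β₀, K₁ > 0 and d ≥ 0 be real constants. Let (t_j)_{j≥0}, (V_j)_{j≥0}, (E_j)_{j≥0} be sequences of real numbers with t₀ = 0, t_{j+1} > t_j, V_j > 0 and E_j ≥ 0 for all j, satisfying for all j ≥ 0: t_{j+1} − t_j ≥ β₀ V_j, V_{j+1} ≤ V_j + M₁ V_j², and E_{j+1} ≤ (1 + M₃(t_{j+1} − t_j)) E_j + K₁ V_j², and with initial bounds V₀ ≤ M₁ d and E₀ = d. Then for all j ≥ 0: V_j ≤ M₁ e^{M₁ t_j / β₀} d and E_j ≤ (1 + K₁ M₁ t_j / β₀) e^{M₃ t_j} d. (This discrete Grönwall-type induction shows that the error between a spiralling crossing orbit and the second-order sliding orbit admits a bound that is linear in the initial separation d, uniformly over any bounded time interval.) -/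
/-!
Dividing a growth recursion of rate `r` by `exp (r * t)` leaves only the rescaled forcing terms to
sum. The delay `β * V j ≤ t (j + 1) - t j` makes the relative growth `M * V j` of `V` at most
`M / β` per unit time, and it turns the forcing `V j ^ 2` into `V j` times a step length. When
`M / β ≤ r`, the exponential growth of the remaining factor `V j` is absorbed by the rescaling, so
that these step lengths telescope and contribute a factor linear in time.
-/

open Finset Real

lemma le_add_sum_mul_exp_of_succ_le {u t b : ℕ → ℝ} {r : ℝ} (hu : ∀ n, 0 ≤ u n)
    (hsucc : ∀ n, u (n + 1) ≤
      (1 + r * (t (n + 1) - t n)) * u n + b n * exp (r * (t (n + 1) - t 0))) (n : ℕ) :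
    u n ≤ (u 0 + ∑ k ∈ range n, b k) * exp (r * (t n - t 0)) := by
  induction n with
  | zero => simp
  | succ n ih =>
    have step_le_exp : 1 + r * (t (n + 1) - t n) ≤ exp (r * (t (n + 1) - t n)) := by
      linarith [add_one_le_exp (r * (t (n + 1) - t n))]
    have exp_split : exp (r * (t (n + 1) - t 0)) =
        exp (r * (t (n + 1) - t n)) * exp (r * (t n - t 0)) := by
      rw [← exp_add]
      ring_nf
    calc
      u (n + 1) ≤ (1 + r * (t (n + 1) - t n)) * u n + b n * exp (r * (t (n + 1) - t 0)) := hsucc n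
      _ ≤ exp (r * (t (n + 1) - t n)) * u n + b n * exp (r * (t (n + 1) - t 0)) := by
        gcongr
        exact hu n
      _ ≤ exp (r * (t (n + 1) - t n)) *
            ((u 0 + ∑ k ∈ range n, b k) * exp (r * (t n - t 0))) +
          b n * exp (r * (t (n + 1) - t 0)) := by gcongr
      _ = (u 0 + ∑ k ∈ range (n + 1), b k) * exp (r * (t (n + 1) - t 0)) := by
        rw [sum_range_succ, exp_split]
        ring

/-- The one-revolution estimates for an orbit spiralling around the tangency surface: `t j` is the
time of its `j`-th intersection with the discontinuity surface and `V j` the value there of the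
first Lie derivative. A revolution lasts at least `β * V j` and increases `V` by at most
`M * V j ^ 2`. -/
structure SpiralEstimates (β M : ℝ) (t V : ℕ → ℝ) : Prop where
  nonneg (j : ℕ) : 0 ≤ V j
  mul_le_sub (j : ℕ) : β * V j ≤ t (j + 1) - t j
  succ_le (j : ℕ) : V (j + 1) ≤ V j + M * V j ^ 2

namespace SpiralEstimates

variable {β M r K : ℝ} {t V E : ℕ → ℝ}

lemma monotone (h : SpiralEstimates β M t V) (hβ : 0 ≤ β) : Monotone t :=
  monotone_nat_of_le_succ fun j ↦
    sub_nonneg.1 ((mul_nonneg hβ (h.nonneg j)).trans (h.mul_le_sub j))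

lemma le_sub_div (h : SpiralEstimates β M t V) (hβ : 0 < β) (j : ℕ) :
    V j ≤ (t (j + 1) - t j) / β :=
  (le_div_iff₀' hβ).2 (h.mul_le_sub j)

lemma le_mul_exp (h : SpiralEstimates β M t V) (hβ : 0 < β) (hM : 0 ≤ M) (j : ℕ) :
    V j ≤ V 0 * exp (M / β * (t j - t 0)) := by
  have growth (k : ℕ) : V (k + 1) ≤ (1 + M / β * (t (k + 1) - t k)) * V k :=
    calc
      V (k + 1) ≤ V k + M * V k ^ 2 := h.succ_le k
      _ = (1 + M * V k) * V k := by ring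
      _ ≤ (1 + M * ((t (k + 1) - t k) / β)) * V k := by
        gcongr
        exacts [h.nonneg k, h.le_sub_div hβ k]
      _ = (1 + M / β * (t (k + 1) - t k)) * V k := by ring
  simpa using le_add_sum_mul_exp_of_succ_le (b := 0) h.nonneg (by simpa using growth) j

lemma sq_le_mul_exp (h : SpiralEstimates β M t V) (hβ : 0 < β) (hM : 0 ≤ M) (hr : M / β ≤ r)
    (j : ℕ) : V j ^ 2 ≤ V 0 / β * (t (j + 1) - t j) * exp (r * (t (j + 1) - t 0)) := by
  have ht := h.monotone hβ.le
  have elapsed_nonneg : 0 ≤ t j - t 0 := sub_nonneg.2 (ht j.zero_le)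
  have step_nonneg : 0 ≤ t (j + 1) - t j := sub_nonneg.2 (ht j.le_succ)
  have hr_nonneg : 0 ≤ r := (div_nonneg hM hβ.le).trans hr
  have V_le : V j ≤ V 0 * exp (r * (t (j + 1) - t 0)) :=
    calc
      V j ≤ V 0 * exp (M / β * (t j - t 0)) := h.le_mul_exp hβ hM j
      _ ≤ V 0 * exp (r * (t (j + 1) - t 0)) := by
        gcongr
        exacts [h.nonneg 0, ht j.le_succ]
  calc
    V j ^ 2 = V j * V j := sq (V j)
    _ ≤ (t (j + 1) - t j) / β * (V 0 * exp (r * (t (j + 1) - t 0))) :=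
      mul_le_mul (h.le_sub_div hβ j) V_le (h.nonneg j) (div_nonneg step_nonneg hβ.le)
    _ = V 0 / β * (t (j + 1) - t j) * exp (r * (t (j + 1) - t 0)) := by ring

lemma error_le_mul_exp (h : SpiralEstimates β M t V) (hβ : 0 < β) (hM : 0 ≤ M) (hr : M / β ≤ r)
    (hK : 0 ≤ K) (hE : ∀ j, 0 ≤ E j)
    (hsucc : ∀ j, E (j + 1) ≤ (1 + r * (t (j + 1) - t j)) * E j + K * V j ^ 2) (j : ℕ) :
    E j ≤ (E 0 + K * V 0 / β * (t j - t 0)) * exp (r * (t j - t 0)) := by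
  have forced_growth (k : ℕ) : E (k + 1) ≤ (1 + r * (t (k + 1) - t k)) * E k +
      K * V 0 / β * (t (k + 1) - t k) * exp (r * (t (k + 1) - t 0)) :=
    calc
      E (k + 1) ≤ (1 + r * (t (k + 1) - t k)) * E k + K * V k ^ 2 := hsucc k
      _ ≤ (1 + r * (t (k + 1) - t k)) * E k +
          K * (V 0 / β * (t (k + 1) - t k) * exp (r * (t (k + 1) - t 0))) := by
        gcongr
        exact h.sq_le_mul_exp hβ hM hr k
      _ = _ := by ring
  simpa only [← mul_sum, sum_range_sub] using le_add_sum_mul_exp_of_succ_le hE forced_growth j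

end SpiralEstimates

/-- Discrete Grönwall-type induction for the consistency theorem: under the one-revolution
estimates `t_{j+1} − t_j ≥ β₀V_j`, `V_{j+1} ≤ V_j + M₁V_j²`,
`E_{j+1} ≤ (1 + M₃(t_{j+1} − t_j))E_j + K₁V_j²`, with `V₀ ≤ M₁d` and `E₀ = d`,
one has `V_j ≤ M₁ e^{M₁t_j/β₀} d` and `E_j ≤ (1 + K₁M₁t_j/β₀) e^{M₃t_j} d` for all `j`. -/
theorem discrete_gronwall_consistency (β₀ M₁ M₃ K₁ d : ℝ)
    (hβ₀ : 0 < β₀) (hM₁ : 0 < M₁) (hM₃ : M₁ / β₀ ≤ M₃) (hK₁ : 0 < K₁) (hd : 0 ≤ d)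
    (t V E : ℕ → ℝ)
    (ht0 : t 0 = 0) (htmono : ∀ j, t j < t (j + 1))
    (hVpos : ∀ j, 0 < V j) (hEnonneg : ∀ j, 0 ≤ E j)
    (h1 : ∀ j, β₀ * V j ≤ t (j + 1) - t j)
    (h2 : ∀ j, V (j + 1) ≤ V j + M₁ * V j ^ 2)
    (h3 : ∀ j, E (j + 1) ≤ (1 + M₃ * (t (j + 1) - t j)) * E j + K₁ * V j ^ 2)
    (hV0 : V 0 ≤ M₁ * d) (hE0 : E 0 = d) :
    ∀ j : ℕ, V j ≤ M₁ * Real.exp (M₁ * t j / β₀) * d ∧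
      E j ≤ (1 + K₁ * M₁ * t j / β₀) * Real.exp (M₃ * t j) * d := by
  have spiral : SpiralEstimates β₀ M₁ t V := ⟨fun j ↦ (hVpos j).le, h1, h2⟩
  intro j
  have ht_nonneg : 0 ≤ t j := ht0 ▸ spiral.monotone hβ₀.le j.zero_le
  constructor
  · calc
      V j ≤ V 0 * exp (M₁ / β₀ * t j) := by
        simpa only [ht0, sub_zero] using spiral.le_mul_exp hβ₀ hM₁.le j
      _ ≤ M₁ * d * exp (M₁ / β₀ * t j) := by gcongr
      _ = M₁ * exp (M₁ * t j / β₀) * d := by ring_nf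
  · calc
      E j ≤ (d + K₁ * V 0 / β₀ * t j) * exp (M₃ * t j) := by
        simpa only [ht0, hE0, sub_zero] using
          spiral.error_le_mul_exp hβ₀ hM₁.le hM₃ hK₁.le hEnonneg h3 j
      _ ≤ (d + K₁ * (M₁ * d) / β₀ * t j) * exp (M₃ * t j) := by gcongr
      _ = (1 + K₁ * M₁ * t j / β₀) * exp (M₃ * t j) * d := by ring
end

section
/- Let n = 2 with coordinates x = (x₁, x₂) and H(x) = x₁. For Z ∈ {L, R}, let f^Z : ℝ² → ℝ² be the quadratic polynomial vector field f^Z(x) = (a_{1Z}x₁ + a₂x₂ + a_{3Z}x₁² + a_{4Z}x₁x₂ + a₅x₂², b_{0Z} + b_{1Z}x₁ + b_{2Z}x₂ + b_{3Z}x₁² + b_{4Z}x₁x₂ + b_{5Z}x₂²), where the coefficients a₂ > 0 and a₅ are shared between Z = L and Z = R (so the system is second-order), and b_{0L} > 0 > b_{0R} (so the origin is an invisible fold for both pieces). Then for each Z ∈ {L,R}: 𝓛_{f^Z}H(0) = 0, 𝓛²_{f^Z}H(0) = a₂ b_{0Z}, and 𝓛³_{f^Z}H(0) = (a_{1Z}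 a₂ + a₂ b_{2Z} + 2 a₅ b_{0Z}) b_{0Z}; and consequently Λ(0) := 𝓛³_{f^L}H(0)/(𝓛²_{f^L}H(0))² − 𝓛³_{f^R}H(0)/(𝓛²_{f^R}H(0))² = (σ_L − σ_R)/a₂, where σ_Z = a_{1Z}/b_{0Z} + b_{2Z}/b_{0Z} − a₅/a₂. In particular, since a₂ > 0, the sign of Λ(0) equals the sign of σ_L − σ_R. -/
/-!
If `ℓ` is linear then `𝓛_f ℓ = ℓ ∘ f`, hence `𝓛_f² ℓ = ℓ (Df f)` and
`𝓛_f³ ℓ = ℓ (D²f (f, f) + Df (Df f))`. At a fold `f = b₀ e₂`, so for the first coordinate `H` only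
the first row of `Df`, the derivative `Df e₂` and the second derivative of `f₁` along `e₂` survive.
This gives `𝓛_f³ H / (𝓛_f² H)² = σ / a₂ + 3 a₅ / a₂²`, whose last term does not depend on the side
and cancels in `Λ`.
-/

section LinearObservable

open scoped Topology

variable {n : ℕ} {f : EuclideanSpace ℝ (Fin n) → EuclideanSpace ℝ (Fin n)}
  {p : EuclideanSpace ℝ (Fin n)}

theorem lieIter_one_clm (f : EuclideanSpace ℝ (Fin n) → EuclideanSpace ℝ (Fin n))
    (ℓ : EuclideanSpace ℝ (Fin n) →L[ℝ] ℝ) (x : EuclideanSpace ℝ (Fin n)) :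
    lieIter f ℓ 1 x = ℓ (f x) :=
  congrArg (· (f x)) ℓ.fderiv

theorem lieIter_two_clm (hf : DifferentiableAt ℝ f p) (ℓ : EuclideanSpace ℝ (Fin n) →L[ℝ] ℝ) :
    lieIter f ℓ 2 p = ℓ (fderiv ℝ f p (f p)) := by
  have hderiv : HasFDerivAt (lieIter f ℓ 1) (ℓ ∘L fderiv ℝ f p) p := by
    rw [funext (lieIter_one_clm f ℓ)]
    exact ℓ.hasFDerivAt.comp p hf.hasFDerivAt
  exact congrArg (· (f p)) hderiv.fderiv

theorem lieIter_three_clm (hf : ContDiffAt ℝ 2 f p) (ℓ : EuclideanSpace ℝ (Fin n) →L[ℝ] ℝ) :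
    lieIter f ℓ 3 p =
      ℓ (fderiv ℝ (fderiv ℝ f) p (f p) (f p) + fderiv ℝ f p (fderiv ℝ f p (f p))) := by
  have hdf : DifferentiableAt ℝ f p := hf.differentiableAt two_ne_zero
  have hd2f : DifferentiableAt ℝ (fderiv ℝ f) p :=
    (hf.fderiv_right (m := 1) one_add_one_eq_two.le).differentiableAt one_ne_zero
  have htwo : lieIter f ℓ 2 =ᶠ[𝓝 p] fun x ↦ ℓ (fderiv ℝ f x (f x)) := by
    filter_upwards [hf.eventually (by simp)] with x hx
    exact lieIter_two_clm (hx.differentiableAt two_ne_zero) ℓ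
  have hderiv : HasFDerivAt (fun x ↦ ℓ (fderiv ℝ f x (f x))) _ p :=
    ℓ.hasFDerivAt.comp p (hd2f.hasFDerivAt.clm_apply hdf.hasFDerivAt)
  calc lieIter f ℓ 3 p
      = fderiv ℝ (fun x ↦ ℓ (fderiv ℝ f x (f x))) p (f p) :=
        congrArg (fun T : _ →L[ℝ] ℝ ↦ T (f p)) htwo.fderiv_eq
    _ = ℓ (fderiv ℝ (fderiv ℝ f) p (f p) (f p) + fderiv ℝ f p (fderiv ℝ f p (f p))) := by
      rw [hderiv.fderiv]
      simp [add_comm]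

end LinearObservable

/-- The part of the 2-jet at `p` of a planar vector field with a fold on the line `x₁ = p₁` that
determines its first three Lie derivatives of `x₁`. The coefficients are named as in the Taylor
expansion `f₁ = a₁x₁ + a₂x₂ + ⋯ + a₅x₂² + ⋯`, `f₂ = b₀ + b₁x₁ + b₂x₂ + ⋯` about `p`, whence the
factor 2 in the second derivative. -/
structure HasFoldJet (f : EuclideanSpace ℝ (Fin 2) → EuclideanSpace ℝ (Fin 2))
    (p : EuclideanSpace ℝ (Fin 2)) (a₁ a₂ a₅ b₀ b₂ : ℝ) : Prop where
  contDiffAt : ContDiffAt ℝ 2 f p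
  apply_eq : f p = b₀ • EuclideanSpace.single 1 1
  fderiv_single_zero : fderiv ℝ f p (EuclideanSpace.single 0 1) 0 = a₁
  fderiv_single_one : fderiv ℝ f p (EuclideanSpace.single 1 1) = !₂[a₂, b₂]
  fderiv_fderiv_single_one :
    fderiv ℝ (fderiv ℝ f) p (EuclideanSpace.single 1 1) (EuclideanSpace.single 1 1) 0 = 2 * a₅

/-- The quantity `σ` of one side of a planar two-fold, whose difference between the two sides
governs stability; the coefficients are those of `HasFoldJet`, with `a₂` and `b₀` nonzero. -/
noncomputable def foldSigma (a₁ a₂ a₅ b₀ b₂ : ℝ) : ℝ :=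
  a₁ / b₀ + b₂ / b₀ - a₅ / a₂

/-- The quantity `Λ` governing the attractivity of a two-fold of the two-sided system `(fL, fR)`
with switching function `H`. It is meaningful only where both second Lie derivatives are nonzero. -/
noncomputable def twoFoldLambda {n : ℕ}
    (fL fR : EuclideanSpace ℝ (Fin n) → EuclideanSpace ℝ (Fin n))
    (H : EuclideanSpace ℝ (Fin n) → ℝ) (p : EuclideanSpace ℝ (Fin n)) : ℝ :=
  lieIter fL H 3 p / (lieIter fL H 2 p) ^ 2 - lieIter fR H 3 p / (lieIter fR H 2 p) ^ 2

namespace HasFoldJet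

variable {f : EuclideanSpace ℝ (Fin 2) → EuclideanSpace ℝ (Fin 2)}
  {H : EuclideanSpace ℝ (Fin 2) → ℝ} {p : EuclideanSpace ℝ (Fin 2)} {a₁ a₂ a₅ b₀ b₂ : ℝ}

theorem fderiv_apply_self (hf : HasFoldJet f p a₁ a₂ a₅ b₀ b₂) :
    fderiv ℝ f p (f p) = b₀ • !₂[a₂, b₂] := by
  rw [hf.apply_eq, map_smul, hf.fderiv_single_one]

theorem fderiv_apply_fderiv_apply_self (hf : HasFoldJet f p a₁ a₂ a₅ b₀ b₂) :
    fderiv ℝ f p (fderiv ℝ f p (f p)) 0 = (a₁ * a₂ + a₂ * b₂) * b₀ := by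
  have hvec : !₂[a₂, b₂] = a₂ • EuclideanSpace.single (0 : Fin 2) (1 : ℝ)
      + b₂ • EuclideanSpace.single (1 : Fin 2) (1 : ℝ) := by
    ext i
    fin_cases i <;> simp
  rw [hf.fderiv_apply_self, map_smul, hvec, map_add, map_smul, map_smul, hf.fderiv_single_one]
  simp only [PiLp.smul_apply, PiLp.add_apply, hf.fderiv_single_zero, smul_eq_mul,
    Matrix.cons_val_zero]
  ring

theorem hessian_apply_self (hf : HasFoldJet f p a₁ a₂ a₅ b₀ b₂) :
    fderiv ℝ (fderiv ℝ f) p (f p) (f p) 0 = 2 * a₅ * b₀ ^ 2 := by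
  rw [hf.apply_eq, map_smul, map_smul, smul_apply, PiLp.smul_apply,
    PiLp.smul_apply, hf.fderiv_fderiv_single_one, smul_eq_mul, smul_eq_mul]
  ring

theorem lieIter_one (hf : HasFoldJet f p a₁ a₂ a₅ b₀ b₂) (hH : ∀ x, H x = x 0) :
    lieIter f H 1 p = 0 := by
  obtain rfl : H = EuclideanSpace.proj (𝕜 := ℝ) (0 : Fin 2) := funext hH
  rw [lieIter_one_clm, hf.apply_eq]
  simp

theorem lieIter_two (hf : HasFoldJet f p a₁ a₂ a₅ b₀ b₂) (hH : ∀ x, H x = x 0) :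
    lieIter f H 2 p = a₂ * b₀ := by
  obtain rfl : H = EuclideanSpace.proj (𝕜 := ℝ) (0 : Fin 2) := funext hH
  rw [lieIter_two_clm (hf.contDiffAt.differentiableAt two_ne_zero), hf.fderiv_apply_self]
  simp [mul_comm]

theorem lieIter_three (hf : HasFoldJet f p a₁ a₂ a₅ b₀ b₂) (hH : ∀ x, H x = x 0) :
    lieIter f H 3 p = (a₁ * a₂ + a₂ * b₂ + 2 * a₅ * b₀) * b₀ := by
  obtain rfl : H = EuclideanSpace.proj (𝕜 := ℝ) (0 : Fin 2) := funext hH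
  rw [lieIter_three_clm hf.contDiffAt, PiLp.proj_apply, PiLp.add_apply,
    hf.hessian_apply_self, hf.fderiv_apply_fderiv_apply_self]
  ring

theorem lieIter_three_div_sq (hf : HasFoldJet f p a₁ a₂ a₅ b₀ b₂) (hH : ∀ x, H x = x 0)
    (ha₂ : a₂ ≠ 0) (hb₀ : b₀ ≠ 0) :
    lieIter f H 3 p / (lieIter f H 2 p) ^ 2
      = foldSigma a₁ a₂ a₅ b₀ b₂ / a₂ + 3 * a₅ / a₂ ^ 2 := by
  rw [hf.lieIter_three hH, hf.lieIter_two hH, foldSigma]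
  field

theorem twoFoldLambda_eq {fL fR : EuclideanSpace ℝ (Fin 2) → EuclideanSpace ℝ (Fin 2)}
    {a₁L a₁R b₀L b₀R b₂L b₂R : ℝ}
    (hL : HasFoldJet fL p a₁L a₂ a₅ b₀L b₂L) (hR : HasFoldJet fR p a₁R a₂ a₅ b₀R b₂R)
    (hH : ∀ x, H x = x 0) (ha₂ : a₂ ≠ 0) (hb₀L : b₀L ≠ 0) (hb₀R : b₀R ≠ 0) :
    twoFoldLambda fL fR H p
      = (foldSigma a₁L a₂ a₅ b₀L b₂L - foldSigma a₁R a₂ a₅ b₀R b₂R) / a₂ := by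
  rw [twoFoldLambda, hL.lieIter_three_div_sq hH ha₂ hb₀L, hR.lieIter_three_div_sq hH ha₂ hb₀R]
  ring

end HasFoldJet

/-- The planar vector field whose components are the quadratic polynomials with coefficients `c` and
`d`, listed in the order `1, x₁, x₂, x₁², x₁x₂, x₂²`. -/
noncomputable def planarQuadratic (c d : Fin 6 → ℝ) (x : EuclideanSpace ℝ (Fin 2)) :
    EuclideanSpace ℝ (Fin 2) :=
  !₂[c 0 + c 1 * x 0 + c 2 * x 1 + c 3 * x 0 ^ 2 + c 4 * x 0 * x 1 + c 5 * x 1 ^ 2,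
    d 0 + d 1 * x 0 + d 2 * x 1 + d 3 * x 0 ^ 2 + d 4 * x 0 * x 1 + d 5 * x 1 ^ 2]

theorem contDiff_planarQuadratic (c d : Fin 6 → ℝ) {k : WithTop ℕ∞} :
    ContDiff ℝ k (planarQuadratic c d) := by
  refine contDiff_euclidean.2 fun i ↦ ?_
  fin_cases i <;> simpa [planarQuadratic] using by fun_prop

theorem hasFDerivAt_quadratic (c : Fin 6 → ℝ) (x : EuclideanSpace ℝ (Fin 2)) :
    HasFDerivAt (fun x : EuclideanSpace ℝ (Fin 2) ↦
        c 0 + c 1 * x 0 + c 2 * x 1 + c 3 * x 0 ^ 2 + c 4 * x 0 * x 1 + c 5 * x 1 ^ 2)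
      ((c 1 + 2 * c 3 * x 0 + c 4 * x 1) • EuclideanSpace.proj (𝕜 := ℝ) (0 : Fin 2)
        + (c 2 + c 4 * x 0 + 2 * c 5 * x 1) • EuclideanSpace.proj (𝕜 := ℝ) (1 : Fin 2)) x := by
  have h0 : HasFDerivAt (fun x : EuclideanSpace ℝ (Fin 2) ↦ x 0)
      (EuclideanSpace.proj (𝕜 := ℝ) (0 : Fin 2)) x := PiLp.hasFDerivAt_apply 2 x 0
  have h1 : HasFDerivAt (fun x : EuclideanSpace ℝ (Fin 2) ↦ x 1)
      (EuclideanSpace.proj (𝕜 := ℝ) (1 : Fin 2)) x := PiLp.hasFDerivAt_apply 2 x 1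
  refine ((((((h0.const_mul (c 1)).const_add (c 0)).add (h1.const_mul (c 2))).add
    ((h0.pow 2).const_mul (c 3))).add ((h0.const_mul (c 4)).mul h1)).add
    ((h1.pow 2).const_mul (c 5))).congr_fderiv ?_
  ext v
  simp only [Nat.add_one_sub_one, pow_one, nsmul_eq_mul, Nat.cast_ofNat, add_apply, smul_apply,
    PiLp.proj_apply, smul_eq_mul]
  ring

theorem fderiv_planarQuadratic_apply (c d : Fin 6 → ℝ) (x v : EuclideanSpace ℝ (Fin 2)) :
    fderiv ℝ (planarQuadratic c d) x v
      = v 0 • planarQuadratic ![c 1, 2 * c 3, c 4, 0, 0, 0] ![d 1, 2 * d 3, d 4, 0, 0, 0] x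
        + v 1 • planarQuadratic ![c 2, c 4, 2 * c 5, 0, 0, 0] ![d 2, d 4, 2 * d 5, 0, 0, 0] x := by
  have hdiff : HasFDerivAt (planarQuadratic c d) (fderiv ℝ (planarQuadratic c d) x) x :=
    ((contDiff_planarQuadratic c d).differentiable one_ne_zero x).hasFDerivAt
  have hcoord (i : Fin 2) := (PiLp.hasFDerivAt_apply (𝕜 := ℝ) 2 _ i).comp x hdiff
  ext i
  fin_cases i
  · refine (DFunLike.congr_fun ((hcoord 0).unique (hasFDerivAt_quadratic c x)) v).trans ?_
    simp only [planarQuadratic, add_apply, smul_apply, PiLp.proj_apply, PiLp.add_apply,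
      PiLp.smul_apply, smul_eq_mul, Matrix.cons_val, Fin.zero_eta]
    ring
  · refine (DFunLike.congr_fun ((hcoord 1).unique (hasFDerivAt_quadratic d x)) v).trans ?_
    simp only [planarQuadratic, add_apply, smul_apply, PiLp.proj_apply, PiLp.add_apply,
      PiLp.smul_apply, smul_eq_mul, Matrix.cons_val, Fin.mk_one]
    ring

theorem hasFoldJet_planarQuadratic {c : Fin 6 → ℝ} (d : Fin 6 → ℝ) (hc : c 0 = 0) :
    HasFoldJet (planarQuadratic c d) 0 (c 1) (c 2) (c 5) (d 0) (d 2) where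
  contDiffAt := (contDiff_planarQuadratic c d).contDiffAt
  apply_eq := by
    ext i
    fin_cases i <;> simp [planarQuadratic, hc]
  fderiv_single_zero := by
    simp [fderiv_planarQuadratic_apply, planarQuadratic]
  fderiv_single_one := by
    simp [fderiv_planarQuadratic_apply, planarQuadratic]
  fderiv_fderiv_single_one := by
    have hsnd : (fun x ↦ fderiv ℝ (planarQuadratic c d) x (EuclideanSpace.single 1 1))
        = planarQuadratic ![c 2, c 4, 2 * c 5, 0, 0, 0] ![d 2, d 4, 2 * d 5, 0, 0, 0] := by
      funext x
      simp [fderiv_planarQuadratic_apply]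
    have hdiff : DifferentiableAt ℝ (fderiv ℝ (planarQuadratic c d)) 0 :=
      ((contDiff_planarQuadratic c d).fderiv_right (m := 1) le_rfl).differentiable one_ne_zero 0
    have hsecond := fderiv_clm_apply hdiff
      (differentiableAt_const (EuclideanSpace.single (1 : Fin 2) (1 : ℝ)))
    rw [hsnd] at hsecond
    have h := congrArg (fun T ↦ T (EuclideanSpace.single 1 1) 0) hsecond
    simpa [fderiv_planarQuadratic_apply, planarQuadratic] using h.symm

theorem hasFoldJet_of_quadratic {f : EuclideanSpace ℝ (Fin 2) → EuclideanSpace ℝ (Fin 2)}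
    {a₁ a₂ a₃ a₄ a₅ b₀ b₁ b₂ b₃ b₄ b₅ : ℝ}
    (hf : ∀ x : EuclideanSpace ℝ (Fin 2), f x =
      !₂[a₁ * x 0 + a₂ * x 1 + a₃ * x 0 ^ 2 + a₄ * x 0 * x 1 + a₅ * x 1 ^ 2,
        b₀ + b₁ * x 0 + b₂ * x 1 + b₃ * x 0 ^ 2 + b₄ * x 0 * x 1 + b₅ * x 1 ^ 2]) :
    HasFoldJet f 0 a₁ a₂ a₅ b₀ b₂ := by
  obtain rfl : f = planarQuadratic ![0, a₁, a₂, a₃, a₄, a₅] ![b₀, b₁, b₂, b₃, b₄, b₅] := by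
    funext x
    simp [hf, planarQuadratic]
  exact hasFoldJet_planarQuadratic _ rfl

theorem sign_div_of_pos (s : ℝ) {a : ℝ} (ha : 0 < a) : Real.sign (s / a) = Real.sign s := by
  rcases lt_trichotomy s 0 with hs | rfl | hs
  · rw [Real.sign_of_neg hs, Real.sign_of_neg (div_neg_of_neg_of_pos hs ha)]
  · rw [zero_div]
  · rw [Real.sign_of_pos hs, Real.sign_of_pos (div_pos hs ha)]

theorem planar_two_fold_Lambda_general
    {fL fR : EuclideanSpace ℝ (Fin 2) → EuclideanSpace ℝ (Fin 2)}
    {H : EuclideanSpace ℝ (Fin 2) → ℝ} {p : EuclideanSpace ℝ (Fin 2)}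
    {a₁L a₁R a₂ a₅ b₀L b₀R b₂L b₂R : ℝ} (ha₂ : 0 < a₂) (hb₀L : b₀L ≠ 0) (hb₀R : b₀R ≠ 0)
    (hH : ∀ x, H x = x 0)
    (hL : HasFoldJet fL p a₁L a₂ a₅ b₀L b₂L) (hR : HasFoldJet fR p a₁R a₂ a₅ b₀R b₂R) :
    lieIter fL H 1 p = 0 ∧ lieIter fR H 1 p = 0 ∧
    lieIter fL H 2 p = a₂ * b₀L ∧ lieIter fR H 2 p = a₂ * b₀R ∧
    lieIter fL H 3 p = (a₁L * a₂ + a₂ * b₂L + 2 * a₅ * b₀L) * b₀L ∧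
    lieIter fR H 3 p = (a₁R * a₂ + a₂ * b₂R + 2 * a₅ * b₀R) * b₀R ∧
    twoFoldLambda fL fR H p
      = (foldSigma a₁L a₂ a₅ b₀L b₂L - foldSigma a₁R a₂ a₅ b₀R b₂R) / a₂ ∧
    Real.sign (twoFoldLambda fL fR H p)
      = Real.sign (foldSigma a₁L a₂ a₅ b₀L b₂L - foldSigma a₁R a₂ a₅ b₀R b₂R) := by
  have hΛ := hL.twoFoldLambda_eq hR hH ha₂.ne' hb₀L hb₀R
  refine ⟨hL.lieIter_one hH, hR.lieIter_one hH, hL.lieIter_two hH, hR.lieIter_two hH,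
    hL.lieIter_three hH, hR.lieIter_three hH, hΛ, ?_⟩
  rw [hΛ, sign_div_of_pos _ ha₂]

/-- Planar second-order Filippov system at an invisible–invisible two-fold: the Lie
derivatives of `H(x) = x₁` at the origin for the quadratic vector fields `f^L, f^R`
(sharing the coefficients `a₂ > 0` and `a₅`, with `b_{0L} > 0 > b_{0R}`) are
`𝓛_{f^Z}H(0) = 0`, `𝓛²_{f^Z}H(0) = a₂b_{0Z}`,
`𝓛³_{f^Z}H(0) = (a_{1Z}a₂ + a₂b_{2Z} + 2a₅b_{0Z})b_{0Z}`, and consequently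
`Λ(0) = (σ_L − σ_R)/a₂` where `σ_Z = a_{1Z}/b_{0Z} + b_{2Z}/b_{0Z} − a₅/a₂`;
in particular `Λ(0)` and `σ_L − σ_R` have the same sign. -/
theorem planar_two_fold_Lambda
    (a1L a1R a2 a3L a3R a4L a4R a5 : ℝ)
    (b0L b0R b1L b1R b2L b2R b3L b3R b4L b4R b5L b5R : ℝ)
    (ha2 : 0 < a2) (hb0L : 0 < b0L) (hb0R : b0R < 0)
    (fL fR : EuclideanSpace ℝ (Fin 2) → EuclideanSpace ℝ (Fin 2))
    (H : EuclideanSpace ℝ (Fin 2) → ℝ)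
    (hH : ∀ x, H x = x 0)
    (hfL : ∀ x : EuclideanSpace ℝ (Fin 2), fL x = (WithLp.equiv 2 (Fin 2 → ℝ)).symm
      ![a1L * x 0 + a2 * x 1 + a3L * (x 0) ^ 2 + a4L * (x 0) * (x 1) + a5 * (x 1) ^ 2,
        b0L + b1L * x 0 + b2L * x 1 + b3L * (x 0) ^ 2 + b4L * (x 0) * (x 1) + b5L * (x 1) ^ 2])
    (hfR : ∀ x : EuclideanSpace ℝ (Fin 2), fR x = (WithLp.equiv 2 (Fin 2 → ℝ)).symm
      ![a1R * x 0 + a2 * x 1 + a3R * (x 0) ^ 2 + a4R * (x 0) * (x 1) + a5 * (x 1) ^ 2,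
        b0R + b1R * x 0 + b2R * x 1 + b3R * (x 0) ^ 2 + b4R * (x 0) * (x 1) + b5R * (x 1) ^ 2]) :
    lieIter fL H 1 0 = 0 ∧ lieIter fR H 1 0 = 0 ∧
    lieIter fL H 2 0 = a2 * b0L ∧ lieIter fR H 2 0 = a2 * b0R ∧
    lieIter fL H 3 0 = (a1L * a2 + a2 * b2L + 2 * a5 * b0L) * b0L ∧
    lieIter fR H 3 0 = (a1R * a2 + a2 * b2R + 2 * a5 * b0R) * b0R ∧
    lieIter fL H 3 0 / (lieIter fL H 2 0) ^ 2 - lieIter fR H 3 0 / (lieIter fR H 2 0) ^ 2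
      = ((a1L / b0L + b2L / b0L - a5 / a2) - (a1R / b0R + b2R / b0R - a5 / a2)) / a2 ∧
    Real.sign (lieIter fL H 3 0 / (lieIter fL H 2 0) ^ 2 -
        lieIter fR H 3 0 / (lieIter fR H 2 0) ^ 2)
      = Real.sign ((a1L / b0L + b2L / b0L - a5 / a2) - (a1R / b0R + b2R / b0R - a5 / a2)) :=
  planar_two_fold_Lambda_general ha2 hb0L.ne' hb0R.ne hH
    (hasFoldJet_of_quadratic hfL) (hasFoldJet_of_quadratic hfR)
end

section
/- Let C ∈ (0, 1/2) and ζ₀ > 0, and set q = √((1 − 2C)/(2C + 1)) (equivalently q² = 1 − 4C/(2C+1)), ζ₁ = q² ζ₀, t₁ = (1 + q) ζ₀, and τ = (1 + q)² ζ₀. Define x₁, x₂ : [0, τ] → ℝ by: for t ∈ [0, t₁], x₂(t) = ζ₀ − t and x₁(t) = −C ζ₀² + ζ₀ t − t²/2; and for t ∈ [t₁, τ], x₂(t) = x₂(t₁) + (t − t₁) and x₁(t) = x₁(t₁) + x₂(t₁)(t − t₁) + (t − t₁)²/2. Then: (x₁, x₂) is continuous and satisfies x₁' = x₂ throughout, with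 x₂' = −1 on (0, t₁) and x₂' = +1 on (t₁, τ); x₁(0) = −C ζ₀², x₂(0) = ζ₀; x₁(t) > −C x₂(t)|x₂(t)| for all t ∈ (0, t₁); x₁(t₁) = −C x₂(t₁)|x₂(t₁)| with x₂(t₁) = −q ζ₀ < 0; x₁(t) < −C x₂(t)|x₂(t)| for all t ∈ (t₁, τ); and x₁(τ) = −C ζ₁², x₂(τ) = ζ₁ > 0. Consequently, the per-revolution times τ_j = (1+q)² (q²)^j ζ₀ obtained by iterating this return map satisfy ∑_{j=0}^∞ τ_j = ((2C+1)/(4C)) (1+q)² ζ₀. -/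
/-!
Along an arc with constant control `u` the quantity `x₂² - 2 u x₁` is conserved. For `u = -1`, a
point of the orbit with velocity `v` therefore lies above the switching curve exactly when the value
`E v` of `x₁ + x₂² / 2` at the point of the curve with velocity `v` is smaller than the value
carried by the orbit. Since `E v = (1/2 - C) v²` for `v ≥ 0` and `E v = (1/2 + C) v²` for `v ≤ 0`,
`E` decreases, then increases, and `E (-q ζ) = E ζ` for `q² = (1 - 2C) / (1 + 2C)`: an orbit leaving
the curve with velocity `ζ > 0` stays above it until the velocity is `-q ζ`. The symmetry
`(x₁, x₂) ↦ (-x₁, -x₂)` turns the arc with `u = 1` into another such half-revolution, started with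
velocity `q ζ`, so a full revolution multiplies the velocity by `q²`.
-/

open Set

theorem hasDerivWithinAt_union_of_isClosed {𝕜 E : Type*} [NontriviallyNormedField 𝕜]
    [NormedAddCommGroup E] [NormedSpace 𝕜 E] {f f' : 𝕜 → E} {s t : Set 𝕜}
    (hs : IsClosed s) (ht : IsClosed t)
    (hfs : ∀ z ∈ s, HasDerivWithinAt f (f' z) s z) (hft : ∀ z ∈ t, HasDerivWithinAt f (f' z) t z)
    (z : 𝕜) : HasDerivWithinAt f (f' z) (s ∪ t) z := by
  refine .union ?_ ?_
  · by_cases hz : z ∈ s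
    · exact hfs z hz
    · exact HasFDerivWithinAt.of_notMem_closure (by rwa [hs.closure_eq])
  · by_cases hz : z ∈ t
    · exact hft z hz
    · exact HasFDerivWithinAt.of_notMem_closure (by rwa [ht.closure_eq])

/-- On `[a, b]`, the pair (position `x`, velocity `v`) follows the orbit of `x' = v`, `v' = u` with
constant control `u`, encoded by its closed form in terms of the state at time `a`. -/
structure IsParabolicArc (u a b : ℝ) (x v : ℝ → ℝ) : Prop where
  vel_eq : ∀ t ∈ Icc a b, v t = v a + u * (t - a)
  pos_eq : ∀ t ∈ Icc a b, x t = x a + v a * (t - a) + u * (t - a) ^ 2 / 2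

namespace IsParabolicArc

variable {u u' a b c t : ℝ} {x v : ℝ → ℝ}

theorem neg (h : IsParabolicArc u a b x v) : IsParabolicArc (-u) a b (-x) (-v) where
  vel_eq t ht := by simp only [Pi.neg_apply, h.vel_eq t ht]; ring
  pos_eq t ht := by simp only [Pi.neg_apply, h.pos_eq t ht]; ring

theorem hasDerivWithinAt_vel (h : IsParabolicArc u a b x v) (ht : t ∈ Icc a b) :
    HasDerivWithinAt v u (Icc a b) t := by
  have hlin : HasDerivAt (fun s ↦ v a + u * (s - a)) u t := by
    simpa using (((hasDerivAt_id t).sub_const a).const_mul u).const_add (v a)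
  exact hlin.hasDerivWithinAt.congr h.vel_eq (h.vel_eq t ht)

theorem hasDerivWithinAt_pos (h : IsParabolicArc u a b x v) (ht : t ∈ Icc a b) :
    HasDerivWithinAt x (v t) (Icc a b) t := by
  have hsub : HasDerivAt (fun s ↦ s - a) 1 t := (hasDerivAt_id t).sub_const a
  have hquad : HasDerivAt (fun s ↦ x a + v a * (s - a) + u * (s - a) ^ 2 / 2) (v t) t := by
    refine (((hsub.const_mul (v a)).const_add (x a)).add
      (((hsub.pow 2).const_mul u).div_const 2)).congr_deriv ?_
    rw [h.vel_eq t ht]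
    ring
  exact hquad.hasDerivWithinAt.congr h.pos_eq (h.pos_eq t ht)

theorem vel_sq_sub_two_mul_pos (h : IsParabolicArc u a b x v) (ht : t ∈ Icc a b) :
    v t ^ 2 - 2 * u * x t = v a ^ 2 - 2 * u * x a := by
  rw [h.vel_eq t ht, h.pos_eq t ht]
  ring

theorem continuousOn_vel_Icc_of_consecutive (hb : b ∈ Icc a c)
    (h : IsParabolicArc u a b x v) (h' : IsParabolicArc u' b c x v) : ContinuousOn v (Icc a c) := by
  rw [← Icc_union_Icc_eq_Icc hb.1 hb.2]
  exact ContinuousOn.union_of_isClosed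
    (fun _ ht ↦ (h.hasDerivWithinAt_vel ht).continuousWithinAt)
    (fun _ ht ↦ (h'.hasDerivWithinAt_vel ht).continuousWithinAt) isClosed_Icc isClosed_Icc

theorem hasDerivWithinAt_pos_Icc_of_consecutive (hb : b ∈ Icc a c)
    (h : IsParabolicArc u a b x v) (h' : IsParabolicArc u' b c x v) (t : ℝ) :
    HasDerivWithinAt x (v t) (Icc a c) t := by
  rw [← Icc_union_Icc_eq_Icc hb.1 hb.2]
  exact hasDerivWithinAt_union_of_isClosed isClosed_Icc isClosed_Icc
    (fun _ ht ↦ h.hasDerivWithinAt_pos ht) (fun _ ht ↦ h'.hasDerivWithinAt_pos ht) t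

end IsParabolicArc

/-- The position of the point with velocity `v` on the switching curve `x = -C v |v|`. -/
def switchingCurve (C v : ℝ) : ℝ :=
  -C * v * |v|

/-- The value of `x + v² / 2`, which is conserved along arcs with control `-1`, at the point with
velocity `v` on the switching curve. -/
noncomputable def switchingEnergy (C v : ℝ) : ℝ :=
  switchingCurve C v + v ^ 2 / 2

/-- The factor `q` by which the speed shrinks between two consecutive switches. -/
noncomputable def contractionRatio (C : ℝ) : ℝ :=
  √((1 - 2 * C) / (2 * C + 1))

section SwitchingCurve

variable {C ζ v : ℝ}

theorem switchingCurve_neg (C v : ℝ) : switchingCurve C (-v) = -switchingCurve C v := by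
  simp only [switchingCurve, abs_neg]
  ring

theorem switchingCurve_of_nonneg (C : ℝ) (hv : 0 ≤ v) : switchingCurve C v = -C * v ^ 2 := by
  rw [switchingCurve, abs_of_nonneg hv]
  ring

theorem switchingEnergy_of_nonneg (C : ℝ) (hv : 0 ≤ v) :
    switchingEnergy C v = (1 / 2 - C) * v ^ 2 := by
  rw [switchingEnergy, switchingCurve_of_nonneg C hv]
  ring

theorem switchingEnergy_of_nonpos (C : ℝ) (hv : v ≤ 0) :
    switchingEnergy C v = (1 / 2 + C) * v ^ 2 := by
  rw [switchingEnergy, switchingCurve, abs_of_nonpos hv]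
  ring

theorem switchingEnergy_strictMonoOn (hC : C < 1 / 2) :
    StrictMonoOn (switchingEnergy C) (Ici 0) := by
  intro v hv w hw hvw
  rw [switchingEnergy_of_nonneg C hv, switchingEnergy_of_nonneg C hw]
  exact mul_lt_mul_of_pos_left (pow_lt_pow_left₀ hvw hv two_ne_zero) (by linarith)

theorem switchingEnergy_strictAntiOn (hC : -(1 / 2) < C) :
    StrictAntiOn (switchingEnergy C) (Iic 0) := by
  intro v hv w hw hvw
  rw [switchingEnergy_of_nonpos C hv, switchingEnergy_of_nonpos C hw]
  exact mul_lt_mul_of_pos_left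
    (sq_lt_sq.2 (by rwa [abs_of_nonpos hw, abs_of_nonpos hv, neg_lt_neg_iff])) (by linarith)

theorem contractionRatio_pos (hC : |C| < 1 / 2) : 0 < contractionRatio C := by
  obtain ⟨hC_left, hC_right⟩ := abs_lt.1 hC
  exact Real.sqrt_pos.2 (div_pos (by linarith) (by linarith))

theorem contractionRatio_sq (hC : |C| < 1 / 2) :
    contractionRatio C ^ 2 = (1 - 2 * C) / (2 * C + 1) := by
  obtain ⟨hC_left, hC_right⟩ := abs_lt.1 hC
  exact Real.sq_sqrt (div_nonneg (by linarith) (by linarith))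

theorem switchingEnergy_neg_contractionRatio_mul (hC : |C| < 1 / 2) (hζ : 0 ≤ ζ) :
    switchingEnergy C (-(contractionRatio C * ζ)) = switchingEnergy C ζ := by
  have hq : 0 ≤ contractionRatio C * ζ := mul_nonneg (contractionRatio_pos hC).le hζ
  have hden : 2 * C + 1 ≠ 0 := by linarith [(abs_lt.1 hC).1]
  rw [switchingEnergy_of_nonpos C (neg_nonpos.2 hq), switchingEnergy_of_nonneg C hζ, neg_sq,
    mul_pow, contractionRatio_sq hC]
  field_simp
  ring

theorem switchingEnergy_lt (hC : |C| < 1 / 2) (hζ : 0 < ζ)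
    (hv : v ∈ Ioo (-(contractionRatio C * ζ)) ζ) : switchingEnergy C v < switchingEnergy C ζ := by
  obtain ⟨hC_left, hC_right⟩ := abs_lt.1 hC
  rcases le_total 0 v with hv_nonneg | hv_nonpos
  · exact switchingEnergy_strictMonoOn hC_right hv_nonneg hζ.le hv.2
  · rw [← switchingEnergy_neg_contractionRatio_mul hC hζ.le]
    exact switchingEnergy_strictAntiOn hC_left (hv.1.le.trans hv_nonpos) hv_nonpos hv.1

end SwitchingCurve

/-- On `[a, b]`, the orbit `(x, v)` leaves the switching curve with positive velocity at time `a`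
and moves with control `-1` for time `(1 + q) v(a)`. A half-revolution with control `1` is one of
the mirror image `(-x, -v)`. -/
structure IsHalfRevolution (C a b : ℝ) (x v : ℝ → ℝ) : Prop where
  arc : IsParabolicArc (-1) a b x v
  pos_start : x a = switchingCurve C (v a)
  vel_start_pos : 0 < v a
  duration : b - a = (1 + contractionRatio C) * v a

namespace IsHalfRevolution

variable {C a b c t : ℝ} {x v : ℝ → ℝ}

theorem of_closed_form {ζ : ℝ} (hζ : 0 < ζ) (hdur : b - a = (1 + contractionRatio C) * ζ)
    (hv : ∀ t ∈ Icc a b, v t = ζ - (t - a))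
    (hx : ∀ t ∈ Icc a b, x t = -C * ζ ^ 2 + ζ * (t - a) - (t - a) ^ 2 / 2) :
    IsHalfRevolution C a b x v := by
  have hq : 0 ≤ contractionRatio C := Real.sqrt_nonneg _
  have ha : a ∈ Icc a b := left_mem_Icc.2 (sub_nonneg.1 (hdur ▸ by positivity))
  have hva : v a = ζ := by simpa using hv a ha
  have hxa : x a = -C * ζ ^ 2 := by simpa using hx a ha
  exact
    { arc :=
        { vel_eq := fun t ht ↦ by rw [hv t ht, hva]; ring
          pos_eq := fun t ht ↦ by rw [hx t ht, hxa, hva]; ring }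
      pos_start := by rw [hxa, hva, switchingCurve_of_nonneg C hζ.le]
      vel_start_pos := hva ▸ hζ
      duration := hva ▸ hdur }

theorem start_lt_end (h : IsHalfRevolution C a b x v) : a < b := by
  have hq : 0 ≤ contractionRatio C := Real.sqrt_nonneg _
  have := h.vel_start_pos
  rw [← sub_pos, h.duration]
  positivity

theorem pos_add_half_vel_sq (h : IsHalfRevolution C a b x v) (ht : t ∈ Icc a b) :
    x t + v t ^ 2 / 2 = switchingEnergy C (v a) := by
  rw [switchingEnergy, ← h.pos_start]
  linarith [h.arc.vel_sq_sub_two_mul_pos ht]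

theorem vel_end (h : IsHalfRevolution C a b x v) : v b = -(contractionRatio C * v a) := by
  rw [h.arc.vel_eq b (right_mem_Icc.2 h.start_lt_end.le), h.duration]
  ring

theorem vel_end_neg (hC : |C| < 1 / 2) (h : IsHalfRevolution C a b x v) : v b < 0 := by
  rw [h.vel_end]
  exact neg_neg_of_pos (mul_pos (contractionRatio_pos hC) h.vel_start_pos)

theorem pos_end (hC : |C| < 1 / 2) (h : IsHalfRevolution C a b x v) :
    x b = switchingCurve C (v b) := by
  have henergy : x b + v b ^ 2 / 2 = switchingEnergy C (v b) := by
    rw [h.pos_add_half_vel_sq (right_mem_Icc.2 h.start_lt_end.le), h.vel_end,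
      switchingEnergy_neg_contractionRatio_mul hC h.vel_start_pos.le]
  exact add_right_cancel henergy

theorem vel_mem_Ioo (h : IsHalfRevolution C a b x v) (ht : t ∈ Ioo a b) :
    v t ∈ Ioo (-(contractionRatio C * v a)) (v a) := by
  rw [h.arc.vel_eq t (Ioo_subset_Icc_self ht)]
  constructor <;> linarith [h.duration, ht.1, ht.2]

theorem switchingCurve_lt_pos (hC : |C| < 1 / 2) (h : IsHalfRevolution C a b x v)
    (ht : t ∈ Ioo a b) : switchingCurve C (v t) < x t := by
  have henergy : switchingEnergy C (v t) < x t + v t ^ 2 / 2 := by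
    rw [h.pos_add_half_vel_sq (Ioo_subset_Icc_self ht)]
    exact switchingEnergy_lt hC h.vel_start_pos (h.vel_mem_Ioo ht)
  exact lt_of_add_lt_add_right henergy

theorem next (hC : |C| < 1 / 2) (h : IsHalfRevolution C a b x v)
    (harc : IsParabolicArc 1 b c x v) (hdur : c - b = (1 + contractionRatio C) * -v b) :
    IsHalfRevolution C b c (-x) (-v) where
  arc := harc.neg
  pos_start := by simp only [Pi.neg_apply, switchingCurve_neg, h.pos_end hC]
  vel_start_pos := neg_pos.2 (h.vel_end_neg hC)
  duration := hdur

theorem pos_lt_switchingCurve_of_neg (hC : |C| < 1 / 2) (h : IsHalfRevolution C a b (-x) (-v))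
    (ht : t ∈ Ioo a b) : x t < switchingCurve C (v t) := by
  have := h.switchingCurve_lt_pos hC ht
  rwa [Pi.neg_apply, Pi.neg_apply, switchingCurve_neg, neg_lt_neg_iff] at this

theorem pos_end_of_neg (hC : |C| < 1 / 2) (h : IsHalfRevolution C a b (-x) (-v)) :
    x b = switchingCurve C (v b) := by
  have := h.pos_end hC
  rwa [Pi.neg_apply, Pi.neg_apply, switchingCurve_neg, neg_inj] at this

theorem vel_return (h : IsHalfRevolution C a b x v) (h' : IsHalfRevolution C b c (-x) (-v)) :
    v c = contractionRatio C ^ 2 * v a := by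
  calc
    v c = contractionRatio C * -v b := neg_inj.1 h'.vel_end
    _ = contractionRatio C ^ 2 * v a := by rw [h.vel_end]; ring

end IsHalfRevolution

theorem hasSum_revolution_times {C : ℝ} (hC_pos : 0 < C) (hC : C < 1 / 2) (ζ : ℝ) :
    HasSum (fun j : ℕ ↦ (1 + contractionRatio C) ^ 2 * (contractionRatio C ^ 2) ^ j * ζ)
      ((2 * C + 1) / (4 * C) * (1 + contractionRatio C) ^ 2 * ζ) := by
  have hratio : 1 - contractionRatio C ^ 2 = 4 * C / (2 * C + 1) := by
    rw [contractionRatio_sq (abs_lt.2 ⟨by linarith, hC⟩)]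
    field_simp
    ring
  have hlt : contractionRatio C ^ 2 < 1 := by
    rw [← sub_pos, hratio]
    positivity
  have hgeom := hasSum_geometric_of_lt_one (sq_nonneg (contractionRatio C)) hlt
  rw [hratio, inv_div] at hgeom
  rw [mul_comm ((2 * C + 1) / (4 * C))]
  exact (hgeom.mul_left _).mul_right ζ

/-- One revolution of the return map of the time-optimal double-integrator control system
(Fuller's phenomenon): starting on the switching curve `x₁ = −Cx₂|x₂|` at `(−Cζ₀², ζ₀)`,
the orbit follows the arc with `ẍ₁ = −1` until it meets the switching curve with `x₂ < 0`
at time `t₁`, then follows the arc with `ẍ₁ = +1` until returning to the switching curve at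
`(−Cζ₁², ζ₁)` at time `τ = (1+q)²ζ₀`, where `ζ₁ = q²ζ₀`; the per-revolution times form a
geometric series with finite total sum `((2C+1)/(4C))(1+q)²ζ₀`. -/
theorem fuller_return_map (C ζ₀ q ζ₁ t₁ τ : ℝ)
    (hC0 : 0 < C) (hC1 : C < 1 / 2) (hζ₀ : 0 < ζ₀)
    (hq : q = Real.sqrt ((1 - 2 * C) / (2 * C + 1)))
    (hζ₁ : ζ₁ = q ^ 2 * ζ₀)
    (ht₁ : t₁ = (1 + q) * ζ₀)
    (hτ : τ = (1 + q) ^ 2 * ζ₀)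
    (x₁ x₂ : ℝ → ℝ)
    (hx₂a : ∀ t ∈ Set.Icc (0:ℝ) t₁, x₂ t = ζ₀ - t)
    (hx₁a : ∀ t ∈ Set.Icc (0:ℝ) t₁, x₁ t = -C * ζ₀ ^ 2 + ζ₀ * t - t ^ 2 / 2)
    (hx₂b : ∀ t ∈ Set.Icc t₁ τ, x₂ t = x₂ t₁ + (t - t₁))
    (hx₁b : ∀ t ∈ Set.Icc t₁ τ, x₁ t = x₁ t₁ + x₂ t₁ * (t - t₁) + (t - t₁) ^ 2 / 2) :
    ContinuousOn x₁ (Set.Icc 0 τ) ∧ ContinuousOn x₂ (Set.Icc 0 τ) ∧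
    (∀ t ∈ Set.Icc (0:ℝ) τ, HasDerivWithinAt x₁ (x₂ t) (Set.Icc 0 τ) t) ∧
    (∀ t ∈ Set.Ioo (0:ℝ) t₁, HasDerivWithinAt x₂ (-1) (Set.Ioo 0 t₁) t) ∧
    (∀ t ∈ Set.Ioo t₁ τ, HasDerivWithinAt x₂ 1 (Set.Ioo t₁ τ) t) ∧
    (x₁ 0 = -C * ζ₀ ^ 2 ∧ x₂ 0 = ζ₀) ∧
    (∀ t ∈ Set.Ioo (0:ℝ) t₁, -C * x₂ t * |x₂ t| < x₁ t) ∧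
    (x₁ t₁ = -C * x₂ t₁ * |x₂ t₁| ∧ x₂ t₁ = -q * ζ₀ ∧ x₂ t₁ < 0) ∧
    (∀ t ∈ Set.Ioo t₁ τ, x₁ t < -C * x₂ t * |x₂ t|) ∧
    (x₁ τ = -C * ζ₁ ^ 2 ∧ x₂ τ = ζ₁ ∧ 0 < ζ₁) ∧
    ∑' j : ℕ, (1 + q) ^ 2 * (q ^ 2) ^ j * ζ₀ = (2 * C + 1) / (4 * C) * (1 + q) ^ 2 * ζ₀ := by
  obtain rfl : q = contractionRatio C := hq
  have hC : |C| < 1 / 2 := abs_lt.2 ⟨by linarith, hC1⟩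
  have hfall : IsHalfRevolution C 0 t₁ x₁ x₂ :=
    .of_closed_form hζ₀ (by rw [ht₁, sub_zero]) (by simpa using hx₂a) (by simpa using hx₁a)
  have hx₂0 : x₂ 0 = ζ₀ := by simpa using hx₂a 0 (left_mem_Icc.2 hfall.start_lt_end.le)
  have hx₁0 : x₁ 0 = -C * ζ₀ ^ 2 := by
    rw [hfall.pos_start, hx₂0, switchingCurve_of_nonneg C hζ₀.le]
  have hx₂t₁ : x₂ t₁ = -contractionRatio C * ζ₀ := by rw [hfall.vel_end, hx₂0, neg_mul]
  have hrise_arc : IsParabolicArc 1 t₁ τ x₁ x₂ := ⟨by simpa using hx₂b, by simpa using hx₁b⟩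
  have hrise := hfall.next hC hrise_arc (by rw [hx₂t₁, hτ, ht₁]; ring)
  have hx₂τ : x₂ τ = ζ₁ := by rw [hfall.vel_return hrise, hx₂0, hζ₁]
  have hζ₁_pos : 0 < ζ₁ := hζ₁ ▸ mul_pos (pow_pos (contractionRatio_pos hC) 2) hζ₀
  have hx₁τ : x₁ τ = -C * ζ₁ ^ 2 := by
    rw [hrise.pos_end_of_neg hC, hx₂τ, switchingCurve_of_nonneg C hζ₁_pos.le]
  have ht₁_mem : t₁ ∈ Icc 0 τ := ⟨hfall.start_lt_end.le, hrise.start_lt_end.le⟩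
  have hx₁' := hfall.arc.hasDerivWithinAt_pos_Icc_of_consecutive ht₁_mem hrise_arc
  exact ⟨fun t _ ↦ (hx₁' t).continuousWithinAt,
    hfall.arc.continuousOn_vel_Icc_of_consecutive ht₁_mem hrise_arc, fun t _ ↦ hx₁' t,
    fun t ht ↦ (hfall.arc.hasDerivWithinAt_vel (Ioo_subset_Icc_self ht)).mono Ioo_subset_Icc_self,
    fun t ht ↦ (hrise_arc.hasDerivWithinAt_vel (Ioo_subset_Icc_self ht)).mono Ioo_subset_Icc_self,
    ⟨hx₁0, hx₂0⟩, fun t ht ↦ hfall.switchingCurve_lt_pos hC ht,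
    ⟨hfall.pos_end hC, hx₂t₁, hfall.vel_end_neg hC⟩,
    fun t ht ↦ hrise.pos_lt_switchingCurve_of_neg hC ht, ⟨hx₁τ, hx₂τ, hζ₁_pos⟩,
    (hasSum_revolution_times hC0 hC1 ζ₀).tsum_eq⟩
end
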